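/- Let X be a real-valued random variable with unbounded distribution F and Y a nonnegative random variable with distribution G, neither degenerate at zero, and let H be the distribution of XY. Suppose (X,Y) follows an FGM distribution with parameter |θ|<1 and satisfies Assumption 2 (Ḡ(bx)=o(H̄(x)) as x→∞ for every constant b>0). If F belongs to the class S(γ) for some γ≥0, then H belongs to S(γ/β_G), where β_G=sup{y:G(y)<1} and γ/β_G is understood as 0 when β_G=∞. -/

import Mathlib

open MeasureTheory ProbabilityTheory Filter Set Asymptotics

noncomputable section

/-- The tail (survival) function `x ↦ P(Z > x)` of a random variable `Z`. -/
def rvTail {Ω : Type*} [MeasureSpace Ω] (Z : Ω → ℝ) (x : ℝ) : ℝ :=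
  (ℙ {ω | x < Z ω}).toReal

/-- The cumulative distribution function `x ↦ P(Z ≤ x)` of a random variable `Z`. -/
def rvCdf {Ω : Type*} [MeasureSpace Ω] (Z : Ω → ℝ) (x : ℝ) : ℝ :=
  (ℙ {ω | Z ω ≤ x}).toReal

/-- The left limit of the cdf, `G(y-) = P(Z < y)`. -/
def rvCdfLeft {Ω : Type*} [MeasureSpace Ω] (Z : Ω → ℝ) (y : ℝ) : ℝ :=
  (ℙ {ω | Z ω < y}).toReal

/-- The distribution of `Z` is unbounded (above): its tail is positive for every `x > 0`. -/
def UnboundedDist {Ω : Type*} [MeasureSpace Ω] (Z : Ω → ℝ) : Prop :=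
  ∀ x > 0, 0 < rvTail Z x

/-- The support `D_Z = {y : P(Z ∈ (y - δ, y + δ)) > 0 for all δ > 0}` of the
distribution of `Z`. -/
def distSupport {Ω : Type*} [MeasureSpace Ω] (Z : Ω → ℝ) : Set ℝ :=
  {y | ∀ δ > 0, 0 < ℙ {ω | Z ω ∈ Ioo (y - δ) (y + δ)}}

/-- The distribution of `Z` belongs to the class `L(γ)`: it is unbounded above and
`P(Z > x - t) ~ e^{γ t} P(Z > x)` as `x → ∞`, for every `t > 0`. -/
def MemLGamma {Ω : Type*} [MeasureSpace Ω] (Z : Ω → ℝ) (γ : ℝ) : Prop :=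
  UnboundedDist Z ∧
    ∀ t > 0, (fun x => rvTail Z (x - t)) ~[atTop] (fun x => Real.exp (γ * t) * rvTail Z x)

/-- The tail of the two-fold convolution of the distribution of `Z` with itself. -/
def convSqTail {Ω : Type*} [MeasureSpace Ω] (Z : Ω → ℝ) (x : ℝ) : ℝ :=
  (((Measure.map Z ℙ).conv (Measure.map Z ℙ)) (Ioi x)).toReal

/-- The distribution of `Z` belongs to the class `S(γ)`: it belongs to `L(γ)`, the
exponential moment `c = ∫ e^{γ y} dV(y)` is finite, and the tail of the two-fold
convolution satisfies `V̄*²(x) ~ 2 c V̄(x)` as `x → ∞`. -/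
def MemSGamma {Ω : Type*} [MeasureSpace Ω] (Z : Ω → ℝ) (γ : ℝ) : Prop :=
  MemLGamma Z γ ∧
    Integrable (fun y => Real.exp (γ * y)) (Measure.map Z ℙ) ∧
    (fun x => convSqTail Z x) ~[atTop]
      (fun x => 2 * (∫ y, Real.exp (γ * y) ∂(Measure.map Z ℙ)) * rvTail Z x)

open Classical in
/-- `γ / β_G`, where `β_G = sup {y : G(y) < 1}` is the right endpoint of the distribution
of `Z`, with the convention that `γ / β_G = 0` when `β_G = ∞`.
(Note that `G(y) < 1 ↔ P(Z > y) > 0`.) -/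
def gammaOverBeta {Ω : Type*} [MeasureSpace Ω] (Z : Ω → ℝ) (γ : ℝ) : ℝ :=
  if BddAbove {y : ℝ | 0 < rvTail Z y} then γ / sSup {y : ℝ | 0 < rvTail Z y} else 0

/-- Assumption 2: `Ḡ(b x) = o(H̄(x))` as `x → ∞` for every constant `b > 0`, where `G` is
the distribution of `Y` and `H` is the distribution of the product `X Y`. -/
def Assumption2 {Ω : Type*} [MeasureSpace Ω] (X Y : Ω → ℝ) : Prop :=
  ∀ b > 0, (fun x => rvTail Y (b * x)) =o[atTop] fun x => rvTail (fun ω => X ω * Y ω) x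

/-- Assumption 1: `K x y` is the conditional probability `P(X > x | Y = y)`, namely for
`y` in the support of `Y` it is the limit of `P(X > x | Y ∈ (y - δ, y + δ])` as `δ → 0+`,
and for `y` outside the support it is the unconditional probability `P(X > x)` (and then
`h y = 1`); `h : [0,∞) → (0,∞)` is a measurable function such that
`P(X > x | Y = y) ~ h(y) P(X > x)` as `x → ∞`, uniformly for `y ≥ 0`. -/
def Assumption1 {Ω : Type*} [MeasureSpace Ω] (X Y : Ω → ℝ) (h : ℝ → ℝ) (K : ℝ → ℝ → ℝ) :
    Prop :=
  Measurable h ∧ (∀ y, 0 ≤ y → 0 < h y) ∧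
    (∀ y, y ∉ distSupport Y → h y = 1 ∧ ∀ x, K x y = rvTail X x) ∧
    (∀ y ∈ distSupport Y, ∀ x : ℝ,
      Tendsto
        (fun δ : ℝ => (ℙ {ω | x < X ω ∧ Y ω ∈ Ioc (y - δ) (y + δ)}).toReal /
          (ℙ {ω | Y ω ∈ Ioc (y - δ) (y + δ)}).toReal)
        (nhdsWithin 0 (Ioi 0)) (nhds (K x y))) ∧
    ∀ ε > 0, ∀ᶠ x in atTop, ∀ y, 0 ≤ y → |K x y / (h y * rvTail X x) - 1| < ε

/-- `(X, Y)` follows a Farlie–Gumbel–Morgenstern (FGM) distribution with parameter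
`θ ∈ [-1, 1]`: `P(X > x, Y > y) = F̄(x) Ḡ(y) (1 + θ F(x) G(y))` for all `x` in the
support of `X` and `y` in the support of `Y`. -/
def FGM {Ω : Type*} [MeasureSpace Ω] (X Y : Ω → ℝ) (θ : ℝ) : Prop :=
  θ ∈ Icc (-1 : ℝ) 1 ∧
    ∀ x ∈ distSupport X, ∀ y ∈ distSupport Y,
      (ℙ {ω | x < X ω ∧ y < Y ω}).toReal =
        rvTail X x * rvTail Y y * (1 + θ * rvCdf X x * rvCdf Y y)

/-- `(X, Y)` follows a bivariate Sarmanov distribution with kernels `φ₁, φ₂` and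
parameter `θ`: the joint law has density `1 + θ φ₁(x) φ₂(y)` with respect to the product
of the marginal laws, where `φ₁, φ₂` are measurable, `E φ₁(X) = E φ₂(Y) = 0` and
`1 + θ φ₁(x) φ₂(y) ≥ 0`. -/
def Sarmanov {Ω : Type*} [MeasureSpace Ω] (X Y : Ω → ℝ) (φ₁ φ₂ : ℝ → ℝ) (θ : ℝ) : Prop :=
  Measurable φ₁ ∧ Measurable φ₂ ∧
    Integrable (fun ω => φ₁ (X ω)) ℙ ∧ Integrable (fun ω => φ₂ (Y ω)) ℙ ∧
    (∫ ω, φ₁ (X ω)) = 0 ∧ (∫ ω, φ₂ (Y ω)) = 0 ∧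
    (∀ x y : ℝ, 0 ≤ y → 0 ≤ 1 + θ * φ₁ x * φ₂ y) ∧
    Measure.map (fun ω => (X ω, Y ω)) ℙ =
      ((Measure.map X ℙ).prod (Measure.map Y ℙ)).withDensity
        (fun p => ENNReal.ofReal (1 + θ * φ₁ p.1 * φ₂ p.2))

/-- The condition `ψ(y) = lim_{δ → 0+} (∫_{y-δ}^{y+δ} φ₂(v) G(dv)) / (G(y+δ) - G(y-δ))`
for all `y` in the support of `Y`. -/
def SarmanovPsi {Ω : Type*} [MeasureSpace Ω] (Y : Ω → ℝ) (φ₂ ψ : ℝ → ℝ) : Prop :=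
  ∀ y ∈ distSupport Y,
    Tendsto
      (fun δ : ℝ => (∫ v in Ioc (y - δ) (y + δ), φ₂ v ∂(Measure.map Y ℙ)) /
        (rvCdf Y (y + δ) - rvCdf Y (y - δ)))
      (nhdsWithin 0 (Ioi 0)) (nhds (ψ y))

/-!
The FGM law has density `1 + θ r_F(u) r_G(v)` with respect to the product of its marginals, where
`r_F(u) = F(u-) - F̄(u)` is monotone and tends to `1`. As `u → ∞` this density is asymptotic,
uniformly in `v`, to the weight `1 + θ r_G(v)`, which is bounded away from `0` because `|θ| < 1`.
Since the tail of `Y` is negligible against that of `XY`, only large values of `X` matter, so the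
tail of `XY` is equivalent to that of a product of independent variables in which `Y` has been
given the density `1 + θ r_G` with respect to `G`; this changes neither the null sets of `G` nor
its right endpoint.

For independent factors, a shift of `XY` by `t` is a shift of `X` by `t / y` on `{Y = y}`, which
yields `L(γ / β_G)`. Within `L(γ)`, convolution equivalence says that two independent copies have
a large sum with both summands large only with negligible probability. This passes from `F` to the
product law by conditioning on the two copies of `Y` and dividing by the larger of them, and it
passes on to any law with an equivalent tail that is dominated by a multiple of the given one.
-/

section Tail

variable (V : Measure ℝ) [IsProbabilityMeasure V]

lemma antitone_measureReal_Ioi : Antitone fun x => V.real (Ioi x) :=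
  fun _ _ h => measureReal_mono (Ioi_subset_Ioi h)

lemma measurable_measureReal_Ioi : Measurable fun x => V.real (Ioi x) :=
  (antitone_measureReal_Ioi V).measurable

lemma tendsto_measureReal_Ioi_atTop : Tendsto (fun x => V.real (Ioi x)) atTop (nhds 0) := by
  have hcdf := (tendsto_cdf_atTop V).const_sub 1
  rw [sub_self] at hcdf
  refine hcdf.congr fun x => ?_
  rw [cdf_eq_real, ← probReal_compl_eq_one_sub measurableSet_Iic, compl_Iic]

lemma eventually_measureReal_Ioi_le {ε : ℝ} (hε : 0 < ε) : ∀ᶠ x in atTop, V.real (Ioi x) ≤ ε :=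
  ((tendsto_measureReal_Ioi_atTop V).eventually_lt_const hε).mono fun _ h => h.le

end Tail

section ProductMeasure

variable {α β : Type*} [MeasurableSpace α] [MeasurableSpace β]

lemma integrable_measureReal {μ : Measure α} {V : Measure β} [IsFiniteMeasure μ]
    [IsFiniteMeasure V] {S : α → Set β} (hS : Measurable fun a => V.real (S a)) :
    Integrable (fun a => V.real (S a)) μ :=
  .of_bound hS.aestronglyMeasurable (V.real univ) <| ae_of_all _ fun a => by
    rw [Real.norm_of_nonneg measureReal_nonneg]
    exact measureReal_mono (subset_univ _)

lemma measureReal_prod_eq_integral (μ : Measure α) (ν : Measure β) [IsFiniteMeasure ν]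
    {S : Set (α × β)} (hS : MeasurableSet S) :
    (μ.prod ν).real S = ∫ a, ν.real (Prod.mk a ⁻¹' S) ∂μ := by
  rw [measureReal_def, Measure.prod_apply hS,
    ← integral_toReal (measurable_measure_prodMk_left hS).aemeasurable
      (ae_of_all _ fun _ => measure_lt_top _ _)]
  rfl

lemma measureReal_prod_swap (μ : Measure α) (ν : Measure β) [SFinite μ] [SFinite ν]
    {S : Set (α × β)} (hS : MeasurableSet S) :
    (ν.prod μ).real (Prod.swap ⁻¹' S) = (μ.prod ν).real S := by
  rw [← Measure.prod_swap (μ := ν) (ν := μ), map_measureReal_apply measurable_swap hS]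

lemma measureReal_prod_eq_integral_symm (μ : Measure α) (ν : Measure β) [IsFiniteMeasure μ]
    [SFinite ν] {S : Set (α × β)} (hS : MeasurableSet S) :
    (μ.prod ν).real S = ∫ b, μ.real ((fun a => (a, b)) ⁻¹' S) ∂ν := by
  rw [← measureReal_prod_swap μ ν hS, measureReal_prod_eq_integral ν μ (measurable_swap hS)]
  rfl

end ProductMeasure

/-- The class `L(γ)` of distributions whose tail behaves, up to bounded shifts of the argument,
like that of an exponential law of rate `γ`. -/
structure ExpTailed (V : Measure ℝ) (γ : ℝ) : Prop where
  tail_pos : ∀ x, 0 < V.real (Ioi x)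
  tendsto_ratio : ∀ t, Tendsto (fun x => V.real (Ioi (x - t)) / V.real (Ioi x)) atTop
    (nhds (Real.exp (γ * t)))

/-- The class `S(γ)` of convolution equivalent distributions. -/
structure ConvEquivalent (V : Measure ℝ) (γ : ℝ) : Prop extends ExpTailed V γ where
  integrable_exp : Integrable (fun y => Real.exp (γ * y)) V
  tendsto_conv : Tendsto (fun x => (V.conv V).real (Ioi x) / V.real (Ioi x)) atTop
    (nhds (2 * ∫ y, Real.exp (γ * y) ∂V))

lemma ExpTailed.of_pos {V : Measure ℝ} {γ : ℝ} (hpos : ∀ x, 0 < V.real (Ioi x))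
    (hratio : ∀ t > 0, Tendsto (fun x => V.real (Ioi (x - t)) / V.real (Ioi x)) atTop
      (nhds (Real.exp (γ * t)))) : ExpTailed V γ := by
  refine ⟨hpos, fun t => ?_⟩
  rcases lt_trichotomy t 0 with ht | rfl | ht
  · have hshift := ((hratio (-t) (by linarith)).comp
      (tendsto_atTop_add_const_right atTop (-t) tendsto_id)).inv₀ (Real.exp_pos _).ne'
    rw [← Real.exp_neg, mul_neg, neg_neg] at hshift
    refine hshift.congr fun x => ?_
    simp only [Function.comp, id, inv_div, sub_neg_eq_add, neg_add_cancel_right]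
    rw [← sub_eq_add_neg]
  · simpa only [sub_zero, mul_zero, Real.exp_zero, div_self (hpos _).ne'] using tendsto_const_nhds
  · exact hratio t ht

/-- The region in which the sum of the coordinates exceeds `x` while each coordinate exceeds the
level `A`. -/
def bothLarge (A x : ℝ) : Set (ℝ × ℝ) := {p | x < p.1 + p.2 ∧ A < p.1 ∧ A < p.2}

/-- Two independent copies of `V` have a large sum with both of them large only with probability
of smaller order than the tail of `V`: given `V ∈ L(γ)`, this is what `S(γ)` adds. -/
def BothLargeNegligible (V : Measure ℝ) : Prop :=
  ∀ ε > 0, ∃ A, ∀ᶠ x in atTop, (V.prod V).real (bothLarge A x) ≤ ε * V.real (Ioi x)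

lemma measurableSet_bothLarge (A x : ℝ) : MeasurableSet (bothLarge A x) :=
  (measurableSet_lt measurable_const (measurable_fst.add measurable_snd)).inter
    ((measurableSet_lt measurable_const measurable_fst).inter
      (measurableSet_lt measurable_const measurable_snd))

lemma bothLarge_anti {A A' : ℝ} (h : A ≤ A') (x : ℝ) : bothLarge A' x ⊆ bothLarge A x :=
  fun _ hp => ⟨hp.1, h.trans_lt hp.2.1, h.trans_lt hp.2.2⟩

lemma BothLargeNegligible.eventually {V : Measure ℝ} [IsFiniteMeasure V]
    (hV : BothLargeNegligible V) {ε : ℝ} (hε : 0 < ε) :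
    ∀ᶠ A in atTop, ∀ᶠ x in atTop, (V.prod V).real (bothLarge A x) ≤ ε * V.real (Ioi x) := by
  obtain ⟨A₀, hA₀⟩ := hV ε hε
  filter_upwards [eventually_ge_atTop A₀] with A hA
  filter_upwards [hA₀] with x hx
  exact (measureReal_mono (bothLarge_anti hA x)).trans hx

lemma tendsto_integral_Iic_atTop {V : Measure ℝ} {f : ℝ → ℝ} (hf : Integrable f V) :
    Tendsto (fun A => ∫ v in Iic A, f v ∂V) atTop (nhds (∫ v, f v ∂V)) :=
  (aecover_Iic tendsto_id).integral_tendsto_of_countably_generated hf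

section Convolution

variable {V : Measure ℝ} [IsProbabilityMeasure V] {γ : ℝ}

lemma measurableSet_fst_le_and_lt_add (A x : ℝ) :
    MeasurableSet {p : ℝ × ℝ | p.1 ≤ A ∧ x < p.1 + p.2} :=
  (measurableSet_le measurable_fst measurable_const).inter
    (measurableSet_lt measurable_const measurable_add)

lemma measureReal_prod_fst_le_and_lt_add (A x : ℝ) :
    (V.prod V).real {p | p.1 ≤ A ∧ x < p.1 + p.2} = ∫ v in Iic A, V.real (Ioi (x - v)) ∂V := by
  rw [measureReal_prod_eq_integral V V (measurableSet_fst_le_and_lt_add A x),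
    ← integral_indicator measurableSet_Iic]
  congr 1 with v
  by_cases hv : v ≤ A
  · rw [indicator_of_mem (mem_Iic.2 hv)]
    congr 1 with w
    simp [hv, sub_lt_iff_lt_add']
  · simp [hv]

lemma measureReal_conv_Ioi {A x : ℝ} (hx : 2 * A ≤ x) :
    (V.conv V).real (Ioi x) =
      2 * (∫ v in Iic A, V.real (Ioi (x - v)) ∂V) + (V.prod V).real (bothLarge A x) := by
  set L₁ : Set (ℝ × ℝ) := {p | p.1 ≤ A ∧ x < p.1 + p.2} with hL₁
  have hmeas : MeasurableSet L₁ := measurableSet_fst_le_and_lt_add A x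
  have hunion : (fun p : ℝ × ℝ => p.1 + p.2) ⁻¹' Ioi x =
      L₁ ∪ Prod.swap ⁻¹' L₁ ∪ bothLarge A x := by
    ext ⟨a, b⟩
    simp only [hL₁, bothLarge, mem_union, mem_preimage, mem_Ioi, mem_ofPred_eq, Prod.swap,
      add_comm b a]
    grind
  have hdisj : Disjoint L₁ (Prod.swap ⁻¹' L₁) := by
    refine Set.disjoint_left.2 fun p h₁ h₂ => ?_
    simp only [hL₁, mem_preimage, mem_ofPred_eq, Prod.fst_swap, Prod.snd_swap] at h₁ h₂
    linarith
  have hdisj' : Disjoint (L₁ ∪ Prod.swap ⁻¹' L₁) (bothLarge A x) := by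
    refine Set.disjoint_left.2 fun p h₁ h₂ => ?_
    simp only [hL₁, bothLarge, mem_union, mem_preimage, mem_ofPred_eq, Prod.fst_swap] at h₁ h₂
    grind
  rw [Measure.conv, map_measureReal_apply measurable_add measurableSet_Ioi, hunion,
    measureReal_union hdisj' (measurableSet_bothLarge A x),
    measureReal_union hdisj (measurable_swap hmeas), measureReal_prod_swap V V hmeas,
    hL₁, measureReal_prod_fst_le_and_lt_add, two_mul]

lemma ExpTailed.tendsto_integral_Iic (hV : ExpTailed V γ) (A : ℝ) :
    Tendsto (fun x => (∫ v in Iic A, V.real (Ioi (x - v)) ∂V) / V.real (Ioi x)) atTop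
      (nhds (∫ v in Iic A, Real.exp (γ * v) ∂V)) := by
  simp_rw [← integral_div]
  have hbound : ∀ᶠ x in atTop, V.real (Ioi (x - A)) / V.real (Ioi x) ≤ Real.exp (γ * A) + 1 :=
    ((hV.tendsto_ratio A).eventually_lt_const (lt_add_one _)).mono fun _ h => h.le
  refine tendsto_integral_filter_of_dominated_convergence (fun _ => Real.exp (γ * A) + 1)
    (Eventually.of_forall fun x => ?_) ?_ (integrable_const _)
    (ae_of_all _ hV.tendsto_ratio)
  · exact (((measurable_measureReal_Ioi V).comp
      (measurable_const.sub measurable_id)).div_const _).aestronglyMeasurable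
  · filter_upwards [hbound] with x hx
    filter_upwards [ae_restrict_mem measurableSet_Iic] with v hv
    rw [Real.norm_of_nonneg (by positivity)]
    refine le_trans ?_ hx
    gcongr
    exacts [measure_ne_top _ _, hv]

lemma ConvEquivalent.bothLargeNegligible (hV : ConvEquivalent V γ) : BothLargeNegligible V := by
  intro ε hε
  obtain ⟨A, hA⟩ := ((tendsto_integral_Iic_atTop hV.integrable_exp).eventually_const_lt
    (show (∫ y, Real.exp (γ * y) ∂V) - ε / 4 < _ by linarith)).exists
  refine ⟨A, ?_⟩
  have hdiff := (hV.tendsto_conv.sub ((hV.toExpTailed.tendsto_integral_Iic A).const_mul 2))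
  filter_upwards [hdiff.eventually_lt_const (show _ < ε by linarith),
    eventually_ge_atTop (2 * A)] with x hx hxA
  rw [measureReal_conv_Ioi hxA, add_div, mul_div_assoc, add_sub_cancel_left,
    div_lt_iff₀ (hV.tail_pos x)] at hx
  exact hx.le

lemma BothLargeNegligible.convEquivalent (hB : BothLargeNegligible V) (hV : ExpTailed V γ)
    (hint : Integrable (fun y => Real.exp (γ * y)) V) : ConvEquivalent V γ := by
  refine ⟨hV, hint, Metric.tendsto_nhds.2 fun ε hε => ?_⟩
  obtain ⟨A, hA, hBA⟩ := ((Metric.tendsto_nhds.1 (tendsto_integral_Iic_atTop hint) (ε / 8)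
    (by linarith)).and (hB.eventually (ε := ε / 4) (by linarith))).exists
  filter_upwards [Metric.tendsto_nhds.1 (hV.tendsto_integral_Iic A) (ε / 8) (by linarith), hBA,
    eventually_ge_atTop (2 * A)] with x hx hBx hxA
  have hratio : (V.prod V).real (bothLarge A x) / V.real (Ioi x) ≤ ε / 4 :=
    (div_le_iff₀ (hV.tail_pos x)).2 hBx
  have hratio0 : 0 ≤ (V.prod V).real (bothLarge A x) / V.real (Ioi x) := by positivity
  rw [measureReal_conv_Ioi hxA, add_div, mul_div_assoc]
  rw [Real.dist_eq, abs_lt] at hx hA ⊢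
  constructor <;> linarith [hx.1, hx.2, hA.1, hA.2]

end Convolution

section Transfer

lemma measureReal_le_of_le_smul {α : Type*} [MeasurableSpace α] {μ ν : Measure α}
    [IsFiniteMeasure ν] {C : ℝ} (hC : 0 ≤ C) (h : μ ≤ ENNReal.ofReal C • ν) (s : Set α) :
    μ.real s ≤ C * ν.real s := by
  have : IsFiniteMeasure (ENNReal.ofReal C • ν) := Measure.smul_finite _ ENNReal.ofReal_ne_top
  calc μ.real s ≤ (ENNReal.ofReal C • ν).real s := ENNReal.toReal_mono (measure_ne_top _ _) (h s)
    _ = C * ν.real s := by rw [measureReal_ennreal_smul_apply, ENNReal.toReal_ofReal hC]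

variable {U V : Measure ℝ} {γ c C : ℝ}

lemma ExpTailed.of_tendsto_ratio [IsFiniteMeasure U] (hV : ExpTailed V γ) (hc : 0 < c)
    (hratio : Tendsto (fun x => U.real (Ioi x) / V.real (Ioi x)) atTop (nhds c)) :
    ExpTailed U γ := by
  refine ⟨fun x => ?_, fun t => ?_⟩
  · obtain ⟨y, hxy, hy⟩ := ((eventually_ge_atTop x).and (hratio.eventually_const_lt hc)).exists
    exact ((div_pos_iff_of_pos_right (hV.tail_pos y)).1 hy).trans_le
      (measureReal_mono (Ioi_subset_Ioi hxy))
  have hshift := hratio.comp (tendsto_atTop_add_const_right atTop (-t) tendsto_id)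
  have hlim := ((hshift.mul (hV.tendsto_ratio t)).div hratio hc.ne')
  rw [mul_div_cancel_left₀ _ hc.ne'] at hlim
  refine hlim.congr fun x => ?_
  have h₀ := (hV.tail_pos x).ne'
  have h₁ := (hV.tail_pos (x - t)).ne'
  simp only [Function.comp, id, ← sub_eq_add_neg, Pi.div_apply]
  field_simp

lemma BothLargeNegligible.of_le_smul [IsFiniteMeasure V]
    (hV : BothLargeNegligible V) (hC : 0 ≤ C) (hUV : U ≤ ENNReal.ofReal C • V) (hc : 0 < c)
    (hratio : ∀ᶠ x in atTop, c * V.real (Ioi x) ≤ U.real (Ioi x)) : BothLargeNegligible U := by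
  intro ε hε
  obtain ⟨A, hA⟩ := hV (ε * c / (C ^ 2 + 1)) (by positivity)
  refine ⟨A, ?_⟩
  have hprod : U.prod U ≤ ENNReal.ofReal (C ^ 2) • V.prod V := by
    refine (Measure.prod_mono hUV hUV).trans_eq ?_
    rw [Measure.prod_smul_left, Measure.prod_smul_right, smul_smul, sq, ENNReal.ofReal_mul hC]
  filter_upwards [hA, hratio] with x hx hUx
  calc (U.prod U).real (bothLarge A x)
      ≤ C ^ 2 * (V.prod V).real (bothLarge A x) :=
        measureReal_le_of_le_smul (sq_nonneg C) hprod _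
    _ ≤ (C ^ 2 + 1) * (ε * c / (C ^ 2 + 1) * V.real (Ioi x)) := by gcongr; linarith
    _ = ε * (c * V.real (Ioi x)) := by field_simp
    _ ≤ ε * U.real (Ioi x) := by gcongr

lemma ConvEquivalent.of_le_smul [IsProbabilityMeasure V] [IsProbabilityMeasure U]
    (hV : ConvEquivalent V γ) (hC : 0 ≤ C) (hUV : U ≤ ENNReal.ofReal C • V) (hc : 0 < c)
    (hratio : Tendsto (fun x => U.real (Ioi x) / V.real (Ioi x)) atTop (nhds c)) :
    ConvEquivalent U γ := by
  have hlow : ∀ᶠ x in atTop, c / 2 * V.real (Ioi x) ≤ U.real (Ioi x) := by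
    filter_upwards [hratio.eventually_const_lt (half_lt_self hc)] with x hx
    exact ((lt_div_iff₀ (hV.tail_pos x)).1 hx).le
  exact (hV.bothLargeNegligible.of_le_smul hC hUV (half_pos hc) hlow).convEquivalent
    (hV.toExpTailed.of_tendsto_ratio hc hratio)
    ((hV.integrable_exp.smul_measure ENNReal.ofReal_ne_top).mono_measure hUV)

end Transfer

section RightEndpoint

open Classical in
/-- The reciprocal `1 / β_G` of the right endpoint `β_G = sup {y | G(y) < 1}` of a distribution,
which is `0` when `β_G = ∞`. -/
def invEndpoint (G : Measure ℝ) : ℝ :=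
  if BddAbove {y | 0 < G.real (Ioi y)} then (sSup {y | 0 < G.real (Ioi y)})⁻¹ else 0

lemma exists_gt_measureReal_Ioi_pos {G : Measure ℝ} [IsFiniteMeasure G] {a : ℝ}
    (ha : 0 < G.real (Ioi a)) : ∃ b > a, 0 < G.real (Ioi b) := by
  by_contra! h
  have hnull : ∀ n : ℕ, G (Ioi (a + 1 / ((n : ℝ) + 1))) = 0 := fun n =>
    (measureReal_eq_zero_iff (measure_ne_top _ _)).1
      ((h _ (lt_add_of_pos_right a (by positivity))).antisymm measureReal_nonneg)
  have hcover : Ioi a ⊆ ⋃ n : ℕ, Ioi (a + 1 / ((n : ℝ) + 1)) := fun y hy => by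
    obtain ⟨n, hn⟩ := exists_nat_one_div_lt (sub_pos.2 (mem_Ioi.1 hy))
    exact mem_iUnion.2 ⟨n, lt_sub_iff_add_lt'.1 hn⟩
  exact ha.ne' (measureReal_eq_zero_iff (measure_ne_top _ _) |>.2
    (measure_mono_null hcover (measure_iUnion_null hnull)))

lemma invEndpoint_congr {G ν : Measure ℝ} (hνG : ν ≪ G) (hGν : G ≪ ν) [IsFiniteMeasure G]
    [IsFiniteMeasure ν] : invEndpoint ν = invEndpoint G := by
  have hset : {y | 0 < ν.real (Ioi y)} = {y | 0 < G.real (Ioi y)} := by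
    ext y
    rw [mem_ofPred_eq, mem_ofPred_eq, measureReal_nonneg.lt_iff_ne', measureReal_nonneg.lt_iff_ne',
      measureReal_ne_zero_iff, measureReal_ne_zero_iff]
    exact not_congr ⟨fun h => hGν h, fun h => hνG h⟩
  rw [invEndpoint, invEndpoint, hset]

lemma ae_invEndpoint_mul_le_one (G : Measure ℝ) [IsFiniteMeasure G] :
    ∀ᵐ y ∂G, 0 < y → invEndpoint G * y ≤ 1 := by
  unfold invEndpoint
  split_ifs with hbdd
  · set b := sSup {y | 0 < G.real (Ioi y)}
    have hnull : G (Ioi b) = 0 := by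
      by_contra hne
      obtain ⟨c, hbc, hc⟩ := exists_gt_measureReal_Ioi_pos
        (measureReal_nonneg.lt_of_ne' ((measureReal_ne_zero_iff (measure_ne_top _ _)).2 hne))
      exact (le_csSup hbdd hc).not_gt hbc
    filter_upwards [measure_eq_zero_iff_ae_notMem.1 hnull] with y hy hy0
    have hyb : y ≤ b := not_lt.1 hy
    exact inv_mul_le_one_of_le₀ hyb (hy0.le.trans hyb)
  · exact ae_of_all _ fun y _ => by simp

lemma invEndpoint_nonneg {G : Measure ℝ} (hG : 0 < G.real (Ioi 0)) : 0 ≤ invEndpoint G := by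
  unfold invEndpoint
  split_ifs with hbdd
  · exact inv_nonneg.2 (le_csSup hbdd hG)
  · exact le_rfl

lemma measureReal_Ioi_inv_pos {G : Measure ℝ} [IsFiniteMeasure G] (hG : 0 < G.real (Ioi 0))
    {κ : ℝ} (hκ : invEndpoint G < κ) : 0 < G.real (Ioi κ⁻¹) := by
  obtain ⟨y, hy, hκy⟩ : ∃ y ∈ {y | 0 < G.real (Ioi y)}, κ⁻¹ < y := by
    have hκ0 := (invEndpoint_nonneg hG).trans_lt hκ
    unfold invEndpoint at hκ
    split_ifs at hκ with hbdd
    · obtain ⟨b, hb0, hb⟩ := exists_gt_measureReal_Ioi_pos hG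
      exact exists_lt_of_lt_csSup ⟨0, hG⟩
        (inv_lt_of_inv_lt₀ (hb0.trans_le (le_csSup hbdd hb)) hκ)
    · exact not_bddAbove_iff.1 hbdd _
  exact hy.trans_le (measureReal_mono (Ioi_subset_Ioi hκy.le))

end RightEndpoint

section IndependentProduct

variable {F G : Measure ℝ} [IsProbabilityMeasure F] [IsProbabilityMeasure G]

lemma integrable_measureReal_Ioi_div (F : Measure ℝ) [IsProbabilityMeasure F] (G : Measure ℝ)
    [IsFiniteMeasure G] (x : ℝ) : Integrable (fun y => F.real (Ioi (x / y))) G :=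
  integrable_measureReal ((measurable_measureReal_Ioi F).comp (measurable_const.div measurable_id))

lemma measureReal_mconv_Ioi (hG : ∀ᵐ y ∂G, 0 ≤ y) {x : ℝ} (hx : 0 ≤ x) :
    (F ∗ₘ G).real (Ioi x) = ∫ y in Ioi 0, F.real (Ioi (x / y)) ∂G := by
  rw [Measure.mconv, map_measureReal_apply measurable_mul measurableSet_Ioi,
    measureReal_prod_eq_integral_symm F G (measurable_mul measurableSet_Ioi),
    ← integral_indicator measurableSet_Ioi]
  refine integral_congr_ae ?_
  filter_upwards [hG] with y hy
  rcases hy.eq_or_lt with rfl | hy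
  · simp [preimage, hx.not_gt]
  · rw [indicator_of_mem (mem_Ioi.2 hy)]
    congr 1 with v
    simp [div_lt_iff₀ hy]

lemma mul_measureReal_Ioi_le_mconv {x y : ℝ} (hx : 0 ≤ x) (hy : 0 < y) :
    F.real (Ioi (x / y)) * G.real (Ioi y) ≤ (F ∗ₘ G).real (Ioi x) := by
  rw [Measure.mconv, map_measureReal_apply measurable_mul measurableSet_Ioi,
    ← measureReal_prod_prod]
  refine measureReal_mono ?_
  rintro ⟨u, v⟩ ⟨hu, hv⟩
  have hu0 : 0 < u := (div_nonneg hx hy.le).trans_lt hu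
  calc x < u * y := (div_lt_iff₀ hy).1 hu
    _ ≤ u * v := mul_le_mul_of_nonneg_left (le_of_lt hv) hu0.le

lemma measureReal_mconv_Ioi_pos (hF : ∀ x, 0 < F.real (Ioi x)) (hG : 0 < G.real (Ioi 0)) (x : ℝ) :
    0 < (F ∗ₘ G).real (Ioi x) := by
  obtain ⟨b, hb0, hb⟩ := exists_gt_measureReal_Ioi_pos hG
  exact (mul_pos (hF _) hb).trans_le <| (mul_measureReal_Ioi_le_mconv (le_max_right x 0) hb0).trans
    (antitone_measureReal_Ioi _ (le_max_left x 0))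

lemma integrable_exp_mconv {γ : ℝ} (hγ : 0 ≤ γ) (hF : Integrable (fun v => Real.exp (γ * v)) F)
    (hG : ∀ᵐ y ∂G, 0 ≤ y) (hG0 : 0 < G.real (Ioi 0)) :
    Integrable (fun z => Real.exp (γ * invEndpoint G * z)) (F ∗ₘ G) := by
  have hmeas : Measurable fun z : ℝ => Real.exp (γ * invEndpoint G * z) := by fun_prop
  rw [Measure.mconv, integrable_map_measure hmeas.aestronglyMeasurable measurable_mul.aemeasurable]
  refine Integrable.mono' ((integrable_const (1 : ℝ)).add (hF.comp_fst G))
    (hmeas.comp measurable_mul).aestronglyMeasurable ?_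
  filter_upwards [Measure.quasiMeasurePreserving_snd.ae hG,
    Measure.quasiMeasurePreserving_snd.ae (ae_invEndpoint_mul_le_one G)] with p hp hqp
  have hq := invEndpoint_nonneg hG0
  have hqp1 : invEndpoint G * p.2 ≤ 1 := by
    rcases hp.eq_or_lt with h | h
    · simp [← h]
    · exact hqp h
  simp only [Function.comp, Pi.add_apply, Real.norm_eq_abs, Real.abs_exp]
  rw [show γ * invEndpoint G * (p.1 * p.2) = γ * p.1 * (invEndpoint G * p.2) by ring]
  rcases le_total p.1 0 with h | h
  · have hexp : Real.exp (γ * p.1 * (invEndpoint G * p.2)) ≤ 1 := Real.exp_le_one_iff.2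
      (mul_nonpos_of_nonpos_of_nonneg (mul_nonpos_of_nonneg_of_nonpos hγ h) (mul_nonneg hq hp))
    linarith [Real.exp_pos (γ * p.1)]
  · have hexp : Real.exp (γ * p.1 * (invEndpoint G * p.2)) ≤ Real.exp (γ * p.1) :=
      Real.exp_le_exp.2 (mul_le_of_le_one_right (mul_nonneg hγ h) hqp1)
    linarith

end IndependentProduct

/-- The distribution `G` has a tail of smaller order than that of `H` at every scale: this is
Assumption 2, with `H` the distribution of the product. -/
def TailNegligible (G H : Measure ℝ) : Prop :=
  ∀ b > 0, (fun x => G.real (Ioi (b * x))) =o[atTop] fun x => H.real (Ioi x)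

lemma TailNegligible.eventually_le {G H : Measure ℝ} (h : TailNegligible G H) {u ε : ℝ}
    (hu : 0 < u) (hε : 0 < ε) : ∀ᶠ x in atTop, G.real (Ioi (x / u)) ≤ ε * H.real (Ioi x) := by
  filter_upwards [(h u⁻¹ (inv_pos.2 hu)).bound hε] with x hx
  rwa [Real.norm_of_nonneg measureReal_nonneg, Real.norm_of_nonneg measureReal_nonneg,
    ← div_eq_inv_mul] at hx

section ProductExpTailed

lemma exists_pos_forall_ge {P : ℝ → Prop} (h : ∀ᶠ u in atTop, P u) : ∃ u₀ > 0, ∀ u ≥ u₀, P u := by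
  obtain ⟨u₀, hu₀⟩ := eventually_atTop.1 (h.and (eventually_gt_atTop 0))
  exact ⟨u₀, (hu₀ u₀ le_rfl).2, fun u hu => (hu₀ u hu).1⟩

lemma setIntegral_indicator_one_Ioi (G : Measure ℝ) {a : ℝ} (ha : 0 ≤ a) :
    ∫ y in Ioi 0, (Ioi a).indicator 1 y ∂G = G.real (Ioi a) := by
  rw [integral_indicator_one measurableSet_Ioi, measureReal_restrict_apply measurableSet_Ioi,
    inter_eq_left.2 (Ioi_subset_Ioi ha)]

lemma integrable_indicator_one {α : Type*} [MeasurableSpace α] (μ : Measure α) [IsFiniteMeasure μ]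
    {s : Set α} (hs : MeasurableSet s) : Integrable (s.indicator (1 : α → ℝ)) μ :=
  (integrable_const 1).indicator hs

lemma ExpTailed.eventually_le {V : Measure ℝ} {γ s c : ℝ} (hV : ExpTailed V γ)
    (hc : Real.exp (γ * s) < c) :
    ∀ᶠ u in atTop, V.real (Ioi (u - s)) ≤ c * V.real (Ioi u) := by
  filter_upwards [(hV.tendsto_ratio s).eventually_lt_const hc] with u hu
  exact ((div_lt_iff₀ (hV.tail_pos u)).1 hu).le

lemma ExpTailed.eventually_ge {V : Measure ℝ} {γ s c : ℝ} (hV : ExpTailed V γ)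
    (hc : c < Real.exp (γ * s)) :
    ∀ᶠ u in atTop, c * V.real (Ioi u) ≤ V.real (Ioi (u - s)) := by
  filter_upwards [(hV.tendsto_ratio s).eventually_const_lt hc] with u hu
  exact ((lt_div_iff₀ (hV.tail_pos u)).1 hu).le

variable {F G : Measure ℝ} [IsProbabilityMeasure F] {γ t c : ℝ}

lemma ExpTailed.measureReal_Ioi_mul_isLittleO (hF : ExpTailed F γ) (hγ : 0 < γ) {a b : ℝ}
    (hb : 0 < b) (hba : b < a) (s : ℝ) :
    (fun x => F.real (Ioi (a * x - s))) =o[atTop] fun x => F.real (Ioi (b * x)) := by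
  refine isLittleO_iff.2 fun ε hε => ?_
  obtain ⟨r, hr⟩ := ((Real.tendsto_exp_atBot.comp (tendsto_id.const_mul_atTop_of_neg
    (neg_lt_zero.2 hγ))).eventually_lt_const hε).exists
  have hr' : Real.exp (γ * (-r)) < ε := by simpa only [Function.comp, id, mul_neg, neg_mul] using hr
  filter_upwards [(tendsto_id.const_mul_atTop hb).eventually (hF.eventually_le hr'),
    (tendsto_id.const_mul_atTop (sub_pos.2 hba)).eventually_ge_atTop (s + r)] with x hx hxr
  rw [Real.norm_of_nonneg measureReal_nonneg, Real.norm_of_nonneg measureReal_nonneg]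
  refine (antitone_measureReal_Ioi F ?_).trans hx
  simp only [id] at hxr ⊢
  linarith

lemma tendsto_measureReal_Ioc_zero (G : Measure ℝ) [IsFiniteMeasure G] :
    Tendsto (fun M => G.real (Ioc 0 M)) (nhdsWithin 0 (Ioi 0)) (nhds 0) := by
  have hlim : Tendsto (G ∘ Ioc 0) (nhdsWithin 0 (Ioi 0)) (nhds (G (⋂ r > (0 : ℝ), Ioc 0 r))) :=
    tendsto_measure_biInter_gt (fun _ _ => measurableSet_Ioc.nullMeasurableSet)
      (fun _ _ _ h => Ioc_subset_Ioc_right h) ⟨1, one_pos, measure_ne_top _ _⟩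
  have hempty : ⋂ r > (0 : ℝ), Ioc 0 r = ∅ := by
    refine eq_empty_of_forall_notMem fun y hy => ?_
    simp only [mem_iInter, mem_Ioc] at hy
    have hy0 := (hy 1 one_pos).1
    linarith [(hy (y / 2) (half_pos hy0)).2]
  rw [hempty, measure_empty] at hlim
  exact (ENNReal.tendsto_toReal ENNReal.zero_ne_top).comp hlim

lemma measureReal_Ioi_sub_div_le {M u₀ x y : ℝ} (hM : 0 < M) (hc : 0 ≤ c) (hu₀ : 0 < u₀)
    (ht : 0 ≤ t) (hshift : ∀ u ≥ u₀, F.real (Ioi (u - t / M)) ≤ c * F.real (Ioi u)) (hx : t ≤ x)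
    (hy : 0 < y) :
    F.real (Ioi ((x - t) / y)) ≤ c * F.real (Ioi (x / y)) +
      F.real (Ioi ((x - t) / M)) * (Ioc 0 M).indicator 1 y + (Ioi (x / u₀)).indicator 1 y := by
  have hind : 0 ≤ (Ioi (x / u₀)).indicator (1 : ℝ → ℝ) y :=
    indicator_nonneg (fun _ _ => zero_le_one) y
  have hfirst : 0 ≤ c * F.real (Ioi (x / y)) := by positivity
  rcases le_or_gt y M with hyM | hyM
  · rw [indicator_of_mem (show y ∈ Ioc 0 M from ⟨hy, hyM⟩), Pi.one_apply, mul_one]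
    have hle : F.real (Ioi ((x - t) / y)) ≤ F.real (Ioi ((x - t) / M)) :=
      antitone_measureReal_Ioi F (div_le_div_of_nonneg_left (sub_nonneg.2 hx) hy hyM)
    linarith
  rw [indicator_of_notMem (s := Ioc 0 M) (fun h => hyM.not_ge h.2), mul_zero, add_zero]
  rcases lt_or_ge (x / u₀) y with hyx | hyx
  · rw [indicator_of_mem (mem_Ioi.2 hyx), Pi.one_apply]
    exact measureReal_le_one.trans (le_add_of_nonneg_left hfirst)
  · refine le_add_of_le_of_nonneg ?_ hind
    rw [sub_div]
    refine (antitone_measureReal_Ioi F ?_).trans (hshift _ ((le_div_comm₀ hu₀ hy).2 hyx))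
    gcongr

variable [IsProbabilityMeasure G]

/- In the next two lemmas `M` is a level such that shifting `x` by `t` costs at most the factor `c`
on `{y > M}` while `{y ≤ M}` contributes negligibly: for `γ = 0` it is close to `0`, for `γ > 0`
slightly below the right endpoint of `G`. -/
lemma ExpTailed.exists_cutoff_of_zero (hF : ExpTailed F 0) (hG : 0 < G.real (Ioi 0))
    (hc : 1 < c) {ε : ℝ} (hε : 0 < ε) :
    ∃ M > 0, (∀ᶠ u in atTop, F.real (Ioi (u - t / M)) ≤ c * F.real (Ioi u)) ∧
      ∀ᶠ x in atTop, F.real (Ioi ((x - t) / M)) * G.real (Ioc 0 M) ≤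
        ε * (F ∗ₘ G).real (Ioi x) := by
  obtain ⟨b, hb0, hb⟩ := exists_gt_measureReal_Ioi_pos hG
  obtain ⟨M, hMsmall, hM0, hMb⟩ := (((tendsto_measureReal_Ioc_zero G).eventually_le_const
    (show 0 < ε / c * G.real (Ioi b) by positivity)).and (Ioo_mem_nhdsGT hb0)).exists
  have hshift := hF.eventually_le (s := t / M) (c := c) (by simpa using hc)
  refine ⟨M, hM0, hshift, ?_⟩
  filter_upwards [(tendsto_id.atTop_div_const hM0).eventually hshift, eventually_ge_atTop 0]
    with x hx hx0
  rw [id, ← sub_div] at hx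
  calc F.real (Ioi ((x - t) / M)) * G.real (Ioc 0 M)
      ≤ (c * F.real (Ioi (x / M))) * (ε / c * G.real (Ioi M)) := by
        have := antitone_measureReal_Ioi G hMb.le
        gcongr
        exact hMsmall.trans (by gcongr)
    _ = ε * (F.real (Ioi (x / M)) * G.real (Ioi M)) := by field_simp
    _ ≤ ε * (F ∗ₘ G).real (Ioi x) := by
        gcongr
        exact mul_measureReal_Ioi_le_mconv hx0 hM0

lemma ExpTailed.exists_cutoff_of_pos (hF : ExpTailed F γ) (hγ : 0 < γ) (hG : 0 < G.real (Ioi 0))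
    (hc : Real.exp (γ * invEndpoint G * t) < c) {ε : ℝ} (hε : 0 < ε) :
    ∃ M > 0, (∀ᶠ u in atTop, F.real (Ioi (u - t / M)) ≤ c * F.real (Ioi u)) ∧
      ∀ᶠ x in atTop, F.real (Ioi ((x - t) / M)) * G.real (Ioc 0 M) ≤
        ε * (F ∗ₘ G).real (Ioi x) := by
  have hcont : Continuous fun κ => Real.exp (γ * κ * t) := by fun_prop
  obtain ⟨κ, hκc, hκ⟩ := (((hcont.tendsto _).mono_left nhdsWithin_le_nhds).eventually_lt_const hc
    |>.and (self_mem_nhdsWithin (s := Ioi (invEndpoint G)))).exists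
  obtain ⟨κ', hκ', hκκ'⟩ := exists_between hκ
  have hκ'0 : 0 < κ' := (invEndpoint_nonneg hG).trans_lt hκ'
  have hGκ' := measureReal_Ioi_inv_pos hG hκ'
  have hsmall := hF.measureReal_Ioi_mul_isLittleO hγ hκ'0 hκκ' (κ * t)
  refine ⟨κ⁻¹, inv_pos.2 (hκ'0.trans hκκ'), hF.eventually_le (by
    simpa only [div_inv_eq_mul, mul_assoc, mul_comm t κ] using hκc), ?_⟩
  filter_upwards [hsmall.bound (show 0 < ε * G.real (Ioi κ'⁻¹) by positivity),
    eventually_ge_atTop 0] with x hx hx0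
  rw [Real.norm_of_nonneg measureReal_nonneg, Real.norm_of_nonneg measureReal_nonneg] at hx
  have hprod := mul_measureReal_Ioi_le_mconv (F := F) (G := G) hx0 (inv_pos.2 hκ'0)
  rw [div_inv_eq_mul, mul_comm x] at hprod
  calc F.real (Ioi ((x - t) / κ⁻¹)) * G.real (Ioc 0 κ⁻¹)
      ≤ F.real (Ioi (κ * x - κ * t)) := by
        rw [div_inv_eq_mul, sub_mul, mul_comm x, mul_comm t]
        exact mul_le_of_le_one_right measureReal_nonneg measureReal_le_one
    _ ≤ ε * (F.real (Ioi (κ' * x)) * G.real (Ioi κ'⁻¹)) := hx.trans_eq (by ring)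
    _ ≤ ε * (F ∗ₘ G).real (Ioi x) := by gcongr

lemma ExpTailed.exists_cutoff (hF : ExpTailed F γ) (hγ : 0 ≤ γ) (hG : 0 < G.real (Ioi 0))
    (hc : Real.exp (γ * invEndpoint G * t) < c) {ε : ℝ} (hε : 0 < ε) :
    ∃ M > 0, (∀ᶠ u in atTop, F.real (Ioi (u - t / M)) ≤ c * F.real (Ioi u)) ∧
      ∀ᶠ x in atTop, F.real (Ioi ((x - t) / M)) * G.real (Ioc 0 M) ≤
        ε * (F ∗ₘ G).real (Ioi x) := by
  rcases hγ.eq_or_lt with rfl | hγ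
  · exact hF.exists_cutoff_of_zero hG (by simpa using hc) hε
  · exact hF.exists_cutoff_of_pos hγ hG hc hε

lemma measureReal_mconv_Ioi_sub_le (hG : ∀ᵐ y ∂G, 0 ≤ y) {M u₀ x : ℝ} (hM : 0 < M) (hc : 0 ≤ c)
    (hu₀ : 0 < u₀) (ht : 0 ≤ t)
    (hshift : ∀ u ≥ u₀, F.real (Ioi (u - t / M)) ≤ c * F.real (Ioi u)) (hx : t ≤ x) :
    (F ∗ₘ G).real (Ioi (x - t)) ≤ c * (F ∗ₘ G).real (Ioi x) +
      F.real (Ioi ((x - t) / M)) * G.real (Ioc 0 M) + G.real (Ioi (x / u₀)) := by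
  have hx0 := ht.trans hx
  have hi₁ := (integrable_measureReal_Ioi_div F (G.restrict (Ioi 0)) x).const_mul c
  have hi₂ := (integrable_indicator_one (G.restrict (Ioi 0)) (measurableSet_Ioc (a := 0)
    (b := M))).const_mul (F.real (Ioi ((x - t) / M)))
  have hi₃ := integrable_indicator_one (G.restrict (Ioi 0)) (measurableSet_Ioi (a := x / u₀))
  have hIoc : ∫ y in Ioi 0, (Ioc 0 M).indicator 1 y ∂G = G.real (Ioc 0 M) := by
    rw [integral_indicator_one measurableSet_Ioc, measureReal_restrict_apply measurableSet_Ioc,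
      inter_eq_left.2 Ioc_subset_Ioi_self]
  rw [measureReal_mconv_Ioi hG (sub_nonneg.2 hx), measureReal_mconv_Ioi hG hx0, ← hIoc,
    ← setIntegral_indicator_one_Ioi G (div_nonneg hx0 hu₀.le), ← integral_const_mul,
    ← integral_const_mul, ← integral_add hi₁ hi₂, ← integral_add ?_ hi₃]
  · exact setIntegral_mono_on (integrable_measureReal_Ioi_div F _ _) ((hi₁.add hi₂).add hi₃)
      measurableSet_Ioi fun y hy => measureReal_Ioi_sub_div_le hM hc hu₀ ht hshift hx hy
  · exact hi₁.add hi₂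

lemma mul_measureReal_mconv_Ioi_le (hG : ∀ᵐ y ∂G, 0 ≤ y) {q u₀ x : ℝ} (ht : 0 ≤ t)
    (hq : ∀ᵐ y ∂G, 0 < y → q * y ≤ 1) (hc : 0 ≤ c) (hu₀ : 0 < u₀)
    (hshift : ∀ u ≥ u₀, c * F.real (Ioi u) ≤ F.real (Ioi (u - t * q))) (hx : t ≤ x) :
    c * (F ∗ₘ G).real (Ioi x) ≤
      (F ∗ₘ G).real (Ioi (x - t)) + c * G.real (Ioi (x / u₀)) := by
  have hx0 := ht.trans hx
  have hpoint : ∀ᵐ y ∂G, y ∈ Ioi (0 : ℝ) → c * F.real (Ioi (x / y)) ≤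
      F.real (Ioi ((x - t) / y)) + c * (Ioi (x / u₀)).indicator 1 y := by
    filter_upwards [hq] with y hqy hy
    have hy0 : 0 < y := hy
    rcases lt_or_ge (x / u₀) y with hyx | hyx
    · rw [indicator_of_mem (mem_Ioi.2 hyx), Pi.one_apply]
      exact (mul_le_mul_of_nonneg_left measureReal_le_one hc).trans
        (le_add_of_nonneg_left measureReal_nonneg)
    · rw [indicator_of_notMem (notMem_Ioi.2 hyx), mul_zero, add_zero, sub_div]
      refine (hshift _ ((le_div_comm₀ hu₀ hy0).2 hyx)).trans (antitone_measureReal_Ioi F ?_)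
      rw [div_eq_mul_inv t y]
      gcongr
      rw [← one_div]; exact (le_div_iff₀ hy0).2 (hqy hy)
  have hi₁ := integrable_measureReal_Ioi_div F (G.restrict (Ioi 0)) (x - t)
  have hi₂ := (integrable_indicator_one (G.restrict (Ioi 0))
    (measurableSet_Ioi (a := x / u₀))).const_mul c
  rw [measureReal_mconv_Ioi hG (sub_nonneg.2 hx), measureReal_mconv_Ioi hG hx0,
    ← setIntegral_indicator_one_Ioi G (div_nonneg hx0 hu₀.le), ← integral_const_mul,
    ← integral_const_mul, ← integral_add hi₁ hi₂]
  exact setIntegral_mono_on_ae ((integrable_measureReal_Ioi_div F _ _).const_mul c) (hi₁.add hi₂)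
    measurableSet_Ioi hpoint

lemma ExpTailed.mconv (hF : ExpTailed F γ) (hγ : 0 ≤ γ) (hG : ∀ᵐ y ∂G, 0 ≤ y)
    (hG0 : 0 < G.real (Ioi 0)) (hneg : TailNegligible G (F ∗ₘ G)) :
    ExpTailed (F ∗ₘ G) (γ * invEndpoint G) := by
  have hpos := measureReal_mconv_Ioi_pos hF.tail_pos hG0
  refine .of_pos hpos fun t ht => tendsto_order.2 ⟨fun a ha => ?_, fun a ha => ?_⟩
  · rcases le_or_gt a 0 with ha0 | ha0
    · exact Eventually.of_forall fun x => ha0.trans_lt (div_pos (hpos _) (hpos _))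
    obtain ⟨c, hac, hc⟩ := exists_between ha
    have hc0 := ha0.trans hac
    obtain ⟨u₀, hu₀, hshift⟩ := exists_pos_forall_ge (hF.eventually_ge (s := t * invEndpoint G)
      (c := c) (by rwa [mul_comm t, ← mul_assoc]))
    have hε : 0 < (c - a) / (2 * c) := div_pos (sub_pos.2 hac) (by positivity)
    filter_upwards [eventually_ge_atTop t, hneg.eventually_le hu₀ hε] with x hx hxG
    have hmain := mul_measureReal_mconv_Ioi_le hG ht.le (ae_invEndpoint_mul_le_one G) hc0.le hu₀
      hshift hx
    have hcG : c * G.real (Ioi (x / u₀)) ≤ (c - a) / 2 * (F ∗ₘ G).real (Ioi x) :=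
      (mul_le_mul_of_nonneg_left hxG hc0.le).trans_eq (by field_simp)
    rw [lt_div_iff₀ (hpos x)]
    nlinarith [mul_pos (sub_pos.2 hac) (hpos x)]
  · obtain ⟨c, hc, hca⟩ := exists_between ha
    have hε : 0 < (a - c) / 4 := by linarith
    obtain ⟨M, hM, hshift, hlow⟩ := hF.exists_cutoff hγ hG0 hc hε
    obtain ⟨u₀, hu₀, hshift⟩ := exists_pos_forall_ge hshift
    filter_upwards [eventually_ge_atTop t, hlow, hneg.eventually_le hu₀ hε] with x hx hxlow hxG
    have hmain := measureReal_mconv_Ioi_sub_le hG hM ((Real.exp_pos _).trans hc).le hu₀ ht.le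
      hshift hx
    rw [div_lt_iff₀ (hpos x)]
    nlinarith [mul_pos (sub_pos.2 hca) (hpos x)]

end ProductExpTailed

section ProductConvEquivalent

lemma mconv_prod_mconv {M N : Type*} [Monoid M] [Monoid N] [MeasurableSpace M] [MeasurableSpace N]
    [MeasurableMul₂ M] [MeasurableMul₂ N] (μ₁ ν₁ : Measure M) (μ₂ ν₂ : Measure N)
    [IsFiniteMeasure μ₁] [IsFiniteMeasure ν₁] [IsFiniteMeasure μ₂] [IsFiniteMeasure ν₂] :
    (μ₁ ∗ₘ ν₁).prod (μ₂ ∗ₘ ν₂) = μ₁.prod μ₂ ∗ₘ ν₁.prod ν₂ := by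
  refine Measure.prod_eq fun s t hs ht => ?_
  have hS := measurable_mul (M := M) hs
  have hT := measurable_mul (M := N) ht
  have hmul : Measurable fun r : (M × N) × M × N => r.1 * r.2 :=
    (measurable_fst.fst.mul measurable_snd.fst).prodMk (measurable_fst.snd.mul measurable_snd.snd)
  simp only [Measure.mconv]
  rw [Measure.map_apply hmul (hs.prod ht), Measure.map_apply measurable_mul hs,
    Measure.map_apply measurable_mul ht, Measure.prod_apply_symm (hmul (hs.prod ht)),
    Measure.prod_apply_symm hS, Measure.prod_apply_symm hT,
    ← lintegral_prod_mul (measurable_measure_prodMk_right hS).aemeasurable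
      (measurable_measure_prodMk_right hT).aemeasurable]
  exact lintegral_congr fun q => by rw [← Measure.prod_prod]; rfl

lemma measurableSet_mul_preimage_bothLarge (q : ℝ × ℝ) (A x : ℝ) :
    MeasurableSet ((· * q) ⁻¹' bothLarge A x) :=
  measurable_mul_const q (measurableSet_bothLarge A x)

lemma measureReal_mul_swap_preimage_bothLarge (F : Measure ℝ) [SFinite F] (q : ℝ × ℝ) (A x : ℝ) :
    (F.prod F).real ((· * q.swap) ⁻¹' bothLarge A x) =
      (F.prod F).real ((· * q) ⁻¹' bothLarge A x) := by
  rw [← measureReal_prod_swap F F (measurableSet_mul_preimage_bothLarge q A x)]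
  congr 1
  ext p
  simp only [bothLarge, mem_preimage, mem_ofPred_eq, Prod.fst_mul, Prod.snd_mul, Prod.fst_swap,
    Prod.snd_swap, add_comm (p.2 * q.1)]
  tauto

variable {F G : Measure ℝ} [IsProbabilityMeasure F] {a A K L C e u₀ x : ℝ}

lemma measureReal_mconv_prod_bothLarge [IsProbabilityMeasure G] (hG : ∀ᵐ y ∂G, 0 ≤ y)
    (hA : 0 ≤ A) (x : ℝ) :
    ((F ∗ₘ G).prod (F ∗ₘ G)).real (bothLarge A x) =
      ∫ q, (F.prod F).real ((· * q) ⁻¹' bothLarge A x)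
        ∂(G.restrict (Ioi 0)).prod (G.restrict (Ioi 0)) := by
  have hmeas : MeasurableSet ((fun r : (ℝ × ℝ) × ℝ × ℝ => r.1 * r.2) ⁻¹' bothLarge A x) :=
    measurable_mul (measurableSet_bothLarge A x)
  rw [mconv_prod_mconv, Measure.mconv,
    map_measureReal_apply measurable_mul (measurableSet_bothLarge A x),
    measureReal_prod_eq_integral_symm _ _ hmeas, Measure.prod_restrict]
  refine (setIntegral_eq_integral_of_ae_compl_eq_zero ?_).symm
  filter_upwards [Measure.quasiMeasurePreserving_fst.ae hG,
    Measure.quasiMeasurePreserving_snd.ae hG] with q hq₁ hq₂ hq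
  have hzero : q.1 = 0 ∨ q.2 = 0 := by
    by_contra! h
    exact hq ⟨hq₁.lt_of_ne' h.1, hq₂.lt_of_ne' h.2⟩
  have hempty : (fun p => (p, q)) ⁻¹' ((fun r : (ℝ × ℝ) × ℝ × ℝ => r.1 * r.2) ⁻¹' bothLarge A x) =
      ∅ := by
    refine eq_empty_of_forall_notMem fun p hp => ?_
    obtain ⟨-, hp₁, hp₂⟩ := hp
    rcases hzero with h | h
    · simp only [Prod.fst_mul, h, mul_zero] at hp₁
      exact hp₁.not_ge hA
    · simp only [Prod.snd_mul, h, mul_zero] at hp₂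
      exact hp₂.not_ge hA
  rw [hempty, measureReal_empty]

/- Divide by the larger weight `y₂`: either both variables are large compared with their scaled sum
`x / y₂`, or one of the two terms contributes at most `a * y₂` and the other one nearly all. -/
lemma measureReal_mul_preimage_bothLarge_le (hA : 0 ≤ A) {y₁ y₂ : ℝ} (hy₁ : 0 < y₁) (hy : y₁ ≤ y₂)
    (he : (F.prod F).real (bothLarge a (x / y₂)) ≤ e * F.real (Ioi (x / y₂)))
    (hshift : F.real (Ioi (x / y₂ - a)) ≤ C * F.real (Ioi (x / y₂))) :
    (F.prod F).real ((· * (y₁, y₂)) ⁻¹' bothLarge A x) ≤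
      F.real (Ioi (x / y₂)) * (e + C * F.real (Ioi (A / y₁))) +
        F.real (Ioi ((x - a * y₂) / y₁)) * F.real (Ioi (A / y₂)) := by
  have hy₂ : 0 < y₂ := hy₁.trans_le hy
  have hcover : (· * (y₁, y₂)) ⁻¹' bothLarge A x ⊆
      (bothLarge a (x / y₂) ∪ Ioi (A / y₁) ×ˢ Ioi (x / y₂ - a)) ∪
        Ioi ((x - a * y₂) / y₁) ×ˢ Ioi (A / y₂) := by
    rintro ⟨u, v⟩ ⟨hsum, hu, hv⟩
    simp only [Prod.fst_mul, Prod.snd_mul] at hsum hu hv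
    have hu0 : 0 < u := pos_of_mul_pos_left (hA.trans_lt hu) hy₁.le
    have huy : u * y₁ ≤ u * y₂ := by gcongr
    simp only [bothLarge, mem_union, mem_prod, mem_Ioi, mem_ofPred_eq, div_lt_iff₀ hy₁,
      div_lt_iff₀ hy₂, sub_lt_iff_lt_add, add_mul]
    rcases le_or_gt (u * y₁) (a * y₂) with hua | hua
    · exact .inl (.inr ⟨hu, by linarith⟩)
    rcases le_or_gt v a with hva | hva
    · exact .inr ⟨by linarith [mul_le_mul_of_nonneg_right hva hy₂.le], hv⟩
    · exact .inl (.inl ⟨by linarith, lt_of_mul_lt_mul_right (hua.trans_le huy) hy₂.le, hva⟩)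
  calc (F.prod F).real ((· * (y₁, y₂)) ⁻¹' bothLarge A x)
      ≤ (F.prod F).real (bothLarge a (x / y₂)) +
          F.real (Ioi (A / y₁)) * F.real (Ioi (x / y₂ - a)) +
          F.real (Ioi ((x - a * y₂) / y₁)) * F.real (Ioi (A / y₂)) := by
        refine (measureReal_mono hcover).trans ((measureReal_union_le _ _).trans ?_)
        rw [← measureReal_prod_prod, ← measureReal_prod_prod]
        gcongr
        exact measureReal_union_le _ _
    _ ≤ e * F.real (Ioi (x / y₂)) + F.real (Ioi (A / y₁)) * (C * F.real (Ioi (x / y₂))) +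
          F.real (Ioi ((x - a * y₂) / y₁)) * F.real (Ioi (A / y₂)) := by gcongr
    _ = _ := by ring

lemma measureReal_Ioi_sub_mul_div_mul_le (hA : 0 ≤ A) (hC : 0 ≤ C) {y₁ y₂ : ℝ}
    (hy₁ : 0 < y₁) (hy : y₁ ≤ y₂) (hax : 2 * (a * y₂) ≤ x) (hx : 0 ≤ x)
    (hshift : F.real (Ioi (x / y₂ - a)) ≤ C * F.real (Ioi (x / y₂))) :
    F.real (Ioi ((x - a * y₂) / y₁)) * F.real (Ioi (A / y₂)) ≤
      F.real (Ioi (x / y₂)) * (C * (F.real (Ioi (A / K)) + (Ioi L).indicator 1 y₁)) +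
        F.real (Ioi (x / (2 * L))) * (Ioi K).indicator 1 y₂ := by
  have hy₂ : 0 < y₂ := hy₁.trans_le hy
  have hfirst : F.real (Ioi ((x - a * y₂) / y₁)) ≤ C * F.real (Ioi (x / y₂)) := by
    refine (antitone_measureReal_Ioi F ?_).trans hshift
    rw [← mul_div_cancel_right₀ a hy₂.ne', ← sub_div, mul_div_cancel_right₀ a hy₂.ne']
    exact div_le_div_of_nonneg_left (by linarith) hy₁ hy
  have hsecond : F.real (Ioi (A / y₂)) ≤ 1 := measureReal_le_one
  rcases le_or_gt y₂ K with hyK | hyK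
  · have hAK : F.real (Ioi (A / y₂)) ≤ F.real (Ioi (A / K)) :=
      antitone_measureReal_Ioi F (by gcongr)
    have hind : 0 ≤ (Ioi L).indicator (1 : ℝ → ℝ) y₁ := indicator_nonneg (fun _ _ => zero_le_one) _
    rw [indicator_of_notMem (s := Ioi K) (notMem_Ioi.2 hyK), mul_zero, add_zero]
    calc _ ≤ C * F.real (Ioi (x / y₂)) * (F.real (Ioi (A / K)) + (Ioi L).indicator 1 y₁) := by
          gcongr; linarith
      _ = _ := by ring
  rw [indicator_of_mem (mem_Ioi.2 hyK), Pi.one_apply, mul_one]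
  rcases lt_or_ge L y₁ with hyL | hyL
  · rw [indicator_of_mem (mem_Ioi.2 hyL), Pi.one_apply]
    calc _ ≤ C * F.real (Ioi (x / y₂)) * (F.real (Ioi (A / K)) + 1) := by
          gcongr; linarith [measureReal_nonneg (μ := F) (s := Ioi (A / K))]
      _ = F.real (Ioi (x / y₂)) * (C * (F.real (Ioi (A / K)) + 1)) := by ring
      _ ≤ _ := le_add_of_nonneg_right measureReal_nonneg
  · rw [indicator_of_notMem (notMem_Ioi.2 hyL), add_zero]
    have hhalf : F.real (Ioi ((x - a * y₂) / y₁)) ≤ F.real (Ioi (x / (2 * L))) := by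
      refine antitone_measureReal_Ioi F ?_
      rw [← div_div]
      exact div_le_div₀ (by linarith) (by linarith) hy₁ hyL
    exact ((mul_le_of_le_one_right measureReal_nonneg hsecond).trans hhalf).trans
      (le_add_of_nonneg_left (by positivity))

lemma measureReal_mul_preimage_bothLarge_le_indicator (hA : 0 ≤ A) (hC : 0 ≤ C) (he : 0 ≤ e)
    (hu₀ : 0 < u₀) (ha : 2 * a ≤ u₀)
    (hboth : ∀ u ≥ u₀, (F.prod F).real (bothLarge a u) ≤ e * F.real (Ioi u))
    (hshift : ∀ u ≥ u₀, F.real (Ioi (u - a)) ≤ C * F.real (Ioi u)) (hx : 0 ≤ x) {y₁ y₂ : ℝ}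
    (hy₁ : 0 < y₁) (hy : y₁ ≤ y₂) :
    (F.prod F).real ((· * (y₁, y₂)) ⁻¹' bothLarge A x) ≤
      F.real (Ioi (x / y₂)) *
          (e + C * F.real (Ioi (A / K)) + C * (F.real (Ioi (A / y₁)) + (Ioi L).indicator 1 y₁)) +
        ((Ioi (x / u₀)).indicator 1 y₂ + F.real (Ioi (x / (2 * L))) * (Ioi K).indicator 1 y₂) := by
  have hy₂ : 0 < y₂ := hy₁.trans_le hy
  have hind : ∀ (s : Set ℝ) (y : ℝ), 0 ≤ s.indicator (1 : ℝ → ℝ) y := fun s y =>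
    indicator_nonneg (fun _ _ => zero_le_one) y
  rcases lt_or_ge (x / u₀) y₂ with hyx | hyx
  · have hone : (F.prod F).real ((· * (y₁, y₂)) ⁻¹' bothLarge A x) ≤ 1 := measureReal_le_one
    rw [indicator_of_mem (mem_Ioi.2 hyx), Pi.one_apply]
    have h₁ := hind (Ioi L) y₁
    have h₂ := hind (Ioi K) y₂
    exact hone.trans ((le_add_of_nonneg_right (by positivity)).trans
      (le_add_of_nonneg_left (by positivity)))
  have hu : u₀ ≤ x / y₂ := (le_div_comm₀ hu₀ hy₂).2 hyx
  have hax : 2 * (a * y₂) ≤ x := by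
    have hux := (le_div_iff₀ hy₂).1 hu
    nlinarith
  have hmain := measureReal_mul_preimage_bothLarge_le hA hy₁ hy (hboth _ hu) (hshift _ hu)
  have hthird := measureReal_Ioi_sub_mul_div_mul_le (K := K) (L := L) hA hC hy₁ hy hax hx
    (hshift _ hu)
  rw [indicator_of_notMem (notMem_Ioi.2 hyx), zero_add]
  linarith

lemma integral_prod_self_le_of_symm {α : Type*} [LinearOrder α] [MeasurableSpace α] {μ : Measure α}
    [IsFiniteMeasure μ] {g : α × α → ℝ} {d f h : α → ℝ} (hd : Integrable d μ) (hf : Integrable f μ)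
    (hh : Integrable h μ) (hd0 : 0 ≤ d) (hf0 : 0 ≤ f) (hh0 : 0 ≤ h) (hg0 : 0 ≤ g)
    (hsymm : ∀ q, g q.swap = g q)
    (hg : ∀ᵐ q ∂μ.prod μ, q.1 ≤ q.2 → g q ≤ d q.2 * f q.1 + h q.2) :
    ∫ q, g q ∂μ.prod μ ≤ 2 * ((∫ y, d y ∂μ) * (∫ y, f y ∂μ) + μ.real univ * ∫ y, h y ∂μ) := by
  set φ : α × α → ℝ := fun q => f q.1 * d q.2 + h q.2 with hφ_def
  have hφ : Integrable φ (μ.prod μ) := (hf.mul_prod hd).add (hh.comp_snd μ)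
  have hφ0 : ∀ q, 0 ≤ φ q := fun q => add_nonneg (mul_nonneg (hf0 _) (hd0 _)) (hh0 _)
  calc ∫ q, g q ∂μ.prod μ ≤ ∫ q, φ q + φ q.swap ∂μ.prod μ := by
        refine integral_mono_of_nonneg (ae_of_all _ hg0) (hφ.add hφ.swap) ?_
        filter_upwards [hg, Measure.measurePreserving_swap.quasiMeasurePreserving.ae hg]
          with q hq hq'
        rcases le_total q.1 q.2 with hle | hle
        · have := hq hle
          have := hφ0 q.swap
          simp only [hφ_def] at *
          linarith
        · have := hq' hle
          have := hφ0 q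
          rw [hsymm] at *
          simp only [φ, Prod.fst_swap, Prod.snd_swap] at *
          linarith
    _ = 2 * ∫ q, φ q ∂μ.prod μ := by
        rw [two_mul]
        exact (integral_add hφ hφ.swap).trans (congrArg _ (integral_prod_swap φ))
    _ = _ := by
        rw [integral_add (hf.mul_prod hd) (hh.comp_snd μ), integral_prod_mul, integral_fun_snd,
          smul_eq_mul, mul_comm (∫ y, f y ∂μ)]

lemma measureReal_mconv_prod_bothLarge_le [IsProbabilityMeasure G] (hG : ∀ᵐ y ∂G, 0 ≤ y)
    (hA : 0 ≤ A) (hC : 0 ≤ C) (he : 0 ≤ e) (hK : 0 ≤ K) (hL : 0 ≤ L) (hu₀ : 0 < u₀)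
    (ha : 2 * a ≤ u₀) (hboth : ∀ u ≥ u₀, (F.prod F).real (bothLarge a u) ≤ e * F.real (Ioi u))
    (hshift : ∀ u ≥ u₀, F.real (Ioi (u - a)) ≤ C * F.real (Ioi u)) (hx : 0 ≤ x) :
    ((F ∗ₘ G).prod (F ∗ₘ G)).real (bothLarge A x) ≤
      2 * ((F ∗ₘ G).real (Ioi x) *
          (e + C * F.real (Ioi (A / K)) + C * ((F ∗ₘ G).real (Ioi A) + G.real (Ioi L))) +
        (G.real (Ioi (x / u₀)) + F.real (Ioi (x / (2 * L))) * G.real (Ioi K))) := by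
  set μ := G.restrict (Ioi 0)
  have hμ : μ.real univ ≤ 1 := by
    rw [measureReal_restrict_apply_univ]; exact measureReal_le_one
  set k := e + C * F.real (Ioi (A / K))
  have hk : 0 ≤ k := by positivity
  have hFA := integrable_measureReal_Ioi_div F μ A
  have hL1 := integrable_indicator_one μ (measurableSet_Ioi (a := L))
  have hf : Integrable (fun y => F.real (Ioi (A / y)) + (Ioi L).indicator 1 y) μ := hFA.add hL1
  have hx1 := integrable_indicator_one μ (measurableSet_Ioi (a := x / u₀))
  have hK1 := (integrable_indicator_one μ (measurableSet_Ioi (a := K))).const_mul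
    (F.real (Ioi (x / (2 * L))))
  have hind : ∀ (s : Set ℝ) (y : ℝ), 0 ≤ s.indicator (1 : ℝ → ℝ) y := fun s y =>
    indicator_nonneg (fun _ _ => zero_le_one) y
  have hpos : ∀ᵐ q ∂μ.prod μ, 0 < q.1 :=
    Measure.quasiMeasurePreserving_fst.ae (ae_restrict_mem measurableSet_Ioi)
  rw [measureReal_mconv_prod_bothLarge hG hA]
  refine (integral_prod_self_le_of_symm (integrable_measureReal_Ioi_div F μ x)
    ((integrable_const k).add (hf.const_mul C)) (hx1.add hK1)
    (fun _ => measureReal_nonneg)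
    (fun y => add_nonneg hk (mul_nonneg hC (add_nonneg measureReal_nonneg (hind _ y))))
    (fun y => add_nonneg (hind _ y) (mul_nonneg measureReal_nonneg (hind _ y)))
    (fun _ => measureReal_nonneg) (fun q => measureReal_mul_swap_preimage_bothLarge F q A x)
    (hpos.mono fun q hq hle => measureReal_mul_preimage_bothLarge_le_indicator hA hC he hu₀ ha
      hboth hshift hx hq hle)).trans ?_
  simp only [Pi.add_apply]
  rw [integral_add (integrable_const k) (hf.const_mul C), integral_const_mul,
    integral_add hFA hL1, integral_add hx1 hK1, integral_const_mul, integral_const, smul_eq_mul,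
    setIntegral_indicator_one_Ioi G hL, setIntegral_indicator_one_Ioi G hK,
    setIntegral_indicator_one_Ioi G (by positivity), ← measureReal_mconv_Ioi hG hx,
    ← measureReal_mconv_Ioi hG hA]
  gcongr
  · exact mul_le_of_le_one_left hk hμ
  · exact mul_le_of_le_one_left (by positivity) hμ

lemma exists_measureReal_Ioi_le_mul (G : Measure ℝ) [IsProbabilityMeasure G] (L : ℝ) {ε : ℝ}
    (hε : 0 < ε) : ∃ K > 0, G.real (Ioi K) ≤ ε * G.real (Ioi L) := by
  rcases (measureReal_nonneg (μ := G) (s := Ioi L)).eq_or_lt with h | h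
  · refine ⟨max L 1, lt_max_of_lt_right one_pos, ?_⟩
    rw [← h, mul_zero, h]
    exact antitone_measureReal_Ioi G (le_max_left _ _)
  · exact ((eventually_gt_atTop 0).and (eventually_measureReal_Ioi_le G (mul_pos hε h))).exists

lemma ConvEquivalent.bothLargeNegligible_mconv [IsProbabilityMeasure G] {γ : ℝ}
    (hF : ConvEquivalent F γ) (hG : ∀ᵐ y ∂G, 0 ≤ y) (hneg : TailNegligible G (F ∗ₘ G)) :
    BothLargeNegligible (F ∗ₘ G) := by
  intro ε hε
  obtain ⟨a, ha⟩ := hF.bothLargeNegligible (ε / 12) (by positivity)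
  set C := Real.exp (γ * a) + 1
  have hC : 0 < C := by positivity
  have hεC : 0 < ε / (12 * C) := by positivity
  obtain ⟨u₀, hu₀, hu⟩ := exists_pos_forall_ge
    ((ha.and (hF.eventually_le (lt_add_one (Real.exp (γ * a))))).and (eventually_ge_atTop (2 * a)))
  obtain ⟨L, hL, hGL⟩ :=
    ((eventually_gt_atTop 0).and (eventually_measureReal_Ioi_le G hεC)).exists
  obtain ⟨K, hK, hGK⟩ := exists_measureReal_Ioi_le_mul G (2 * L) (show 0 < ε / 12 by positivity)
  obtain ⟨A, hA, hWA, hFA⟩ := ((eventually_ge_atTop 0).and ((eventually_measureReal_Ioi_le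
    (F ∗ₘ G) hεC).and ((tendsto_id.atTop_div_const hK).eventually
      (eventually_measureReal_Ioi_le F hεC)))).exists
  refine ⟨A, ?_⟩
  filter_upwards [hneg.eventually_le hu₀ (show 0 < ε / 12 by positivity), eventually_ge_atTop 0]
    with x hx hx0
  have hfirst : ε / 12 + C * F.real (Ioi (A / K)) + C * ((F ∗ₘ G).real (Ioi A) + G.real (Ioi L)) ≤
      4 * (ε / 12) := by
    calc _ = ε / 12 + C * (F.real (Ioi (A / K)) + ((F ∗ₘ G).real (Ioi A) + G.real (Ioi L))) := by
          ring
      _ ≤ ε / 12 + C * (ε / (12 * C) + (ε / (12 * C) + ε / (12 * C))) := by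
          gcongr; exact hFA
      _ = 4 * (ε / 12) := by field_simp; ring
  have hlast : F.real (Ioi (x / (2 * L))) * G.real (Ioi K) ≤ ε / 12 * (F ∗ₘ G).real (Ioi x) :=
    calc _ ≤ F.real (Ioi (x / (2 * L))) * (ε / 12 * G.real (Ioi (2 * L))) := by gcongr
      _ = ε / 12 * (F.real (Ioi (x / (2 * L))) * G.real (Ioi (2 * L))) := by ring
      _ ≤ _ := by gcongr; exact mul_measureReal_Ioi_le_mconv hx0 (by positivity)
  calc _ ≤ _ := measureReal_mconv_prod_bothLarge_le hG hA hC.le (by positivity) hK.le hL.le hu₀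
        (hu u₀ le_rfl).2 (fun u h => (hu u h).1.1) (fun u h => (hu u h).1.2) hx0
    _ ≤ 2 * ((F ∗ₘ G).real (Ioi x) * (4 * (ε / 12)) +
          (ε / 12 * (F ∗ₘ G).real (Ioi x) + ε / 12 * (F ∗ₘ G).real (Ioi x))) := by gcongr
    _ = ε * (F ∗ₘ G).real (Ioi x) := by ring

theorem ConvEquivalent.mconv [IsProbabilityMeasure G] {γ : ℝ} (hF : ConvEquivalent F γ)
    (hγ : 0 ≤ γ) (hG : ∀ᵐ y ∂G, 0 ≤ y) (hG0 : 0 < G.real (Ioi 0))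
    (hneg : TailNegligible G (F ∗ₘ G)) : ConvEquivalent (F ∗ₘ G) (γ * invEndpoint G) :=
  (hF.bothLargeNegligible_mconv hG hneg).convEquivalent (hF.toExpTailed.mconv hγ hG hG0 hneg)
    (integrable_exp_mconv hγ hF.integrable_exp hG hG0)

end ProductConvEquivalent

section DependentProduct

lemma isBigO_measureReal_of_le_smul {α ι : Type*} [MeasurableSpace α] {μ ν : Measure α}
    [IsFiniteMeasure ν] {C : ℝ} (hC : 0 ≤ C) (h : μ ≤ ENNReal.ofReal C • ν) (l : Filter ι)
    (s : ι → Set α) : (fun i => μ.real (s i)) =O[l] fun i => ν.real (s i) :=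
  .of_bound C <| Eventually.of_forall fun i => by
    simpa only [Real.norm_of_nonneg measureReal_nonneg] using measureReal_le_of_le_smul hC h (s i)

lemma TailNegligible.of_le_smul_left {G H ν : Measure ℝ} [IsFiniteMeasure G] {C : ℝ}
    (h : TailNegligible G H) (hC : 0 ≤ C) (hν : ν ≤ ENNReal.ofReal C • G) :
    TailNegligible ν H :=
  fun b hb => (isBigO_measureReal_of_le_smul hC hν _ _).trans_isLittleO (h b hb)

lemma TailNegligible.of_le_smul_right {G H K : Measure ℝ} [IsFiniteMeasure K] {C : ℝ}
    (h : TailNegligible G H) (hC : 0 ≤ C) (hH : H ≤ ENNReal.ofReal C • K) :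
    TailNegligible G K :=
  fun b hb => (h b hb).trans_isBigO (isBigO_measureReal_of_le_smul hC hH _ _)

/-- The laws `J` and `K` on the plane are asymptotically equal where the first coordinate is large,
uniformly over the second coordinate. -/
def AsympEqFst (J K : Measure (ℝ × ℝ)) : Prop :=
  ∀ ε > 0, ∀ᶠ u in atTop, ∀ S, MeasurableSet S → S ⊆ {p | u < p.1} →
    |J.real S - K.real S| ≤ ε * K.real S

variable {F ν : Measure ℝ} [IsProbabilityMeasure F] [IsProbabilityMeasure ν]
  {J : Measure (ℝ × ℝ)} {γ C : ℝ}

lemma measureReal_prod_lt_mul_diff_le (hν : ∀ᵐ y ∂ν, 0 ≤ y) {u x : ℝ} (hu : 0 < u) :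
    (F.prod ν).real ({p | x < p.1 * p.2} \ {p | u < p.1}) ≤ ν.real (Ioi (x / u)) := by
  calc (F.prod ν).real ({p | x < p.1 * p.2} \ {p | u < p.1})
      ≤ (F.prod ν).real (univ ×ˢ Ioi (x / u)) := by
        refine ENNReal.toReal_mono (measure_ne_top _ _) (measure_mono_ae ?_)
        filter_upwards [Measure.quasiMeasurePreserving_snd.ae hν] with p hp hpx
        refine ⟨mem_univ _, (div_lt_iff₀' hu).2 (lt_of_lt_of_le hpx.1 ?_)⟩
        exact mul_le_mul_of_nonneg_right (not_lt.1 hpx.2) hp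
    _ = ν.real (Ioi (x / u)) := by rw [measureReal_prod_prod, probReal_univ, one_mul]

lemma AsympEqFst.tendsto_mul_tail_ratio [IsFiniteMeasure J] (h : AsympEqFst J (F.prod ν))
    (hν : ∀ᵐ y ∂ν, 0 ≤ y) (hC : 0 ≤ C) (hJ : J ≤ ENNReal.ofReal C • F.prod ν)
    (hpos : ∀ x, 0 < (F ∗ₘ ν).real (Ioi x)) (hneg : TailNegligible ν (F ∗ₘ ν)) :
    Tendsto (fun x => (J.map fun p => p.1 * p.2).real (Ioi x) / (F ∗ₘ ν).real (Ioi x)) atTop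
      (nhds 1) := by
  refine Metric.tendsto_nhds.2 fun ε hε => ?_
  obtain ⟨u, hu, hclose⟩ := exists_pos_forall_ge (h (ε / 4) (by positivity))
  have hδ : 0 < ε / (4 * (C + 1)) := by positivity
  filter_upwards [hneg.eventually_le hu hδ] with x hxν
  have hpos := hpos x
  rw [Real.dist_eq, div_sub_one hpos.ne', abs_div, abs_of_pos hpos, div_lt_iff₀ hpos]
  rw [Measure.mconv, map_measureReal_apply measurable_mul measurableSet_Ioi] at hxν hpos ⊢
  rw [map_measureReal_apply measurable_mul measurableSet_Ioi]
  set K := F.prod ν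
  set T : Set (ℝ × ℝ) := (fun p => p.1 * p.2) ⁻¹' Ioi x
  set L : Set (ℝ × ℝ) := {p | u < p.1}
  have hL : MeasurableSet L := measurableSet_lt measurable_const measurable_fst
  have hT : MeasurableSet T := measurable_mul measurableSet_Ioi
  have hlarge := abs_le.1 (hclose u le_rfl (T ∩ L) (hT.inter hL) inter_subset_right)
  have hsmall : (C + 1) * K.real (T \ L) ≤ ε / 4 * K.real T :=
    (mul_le_mul_of_nonneg_left ((measureReal_prod_lt_mul_diff_le hν hu).trans hxν)
      (by positivity)).trans_eq (by field_simp)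
  have hJsmall : J.real (T \ L) ≤ C * K.real (T \ L) := measureReal_le_of_le_smul hC hJ _
  have hJT := measureReal_inter_add_sdiff (μ := J) (s := T) hL
  have hKT := measureReal_inter_add_sdiff (μ := K) (s := T) hL
  have hinter : ε * K.real (T ∩ L) ≤ ε * K.real T :=
    mul_le_mul_of_nonneg_left (measureReal_mono inter_subset_left) hε.le
  have hJ0 : 0 ≤ J.real (T \ L) := measureReal_nonneg
  have hK0 : 0 ≤ K.real (T \ L) := measureReal_nonneg
  have hCK0 := mul_nonneg hC hK0
  have hεpos := mul_pos hε hpos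
  rw [abs_lt]
  constructor <;> linarith

theorem ConvEquivalent.map_mul [IsProbabilityMeasure J] (hF : ConvEquivalent F γ) (hγ : 0 ≤ γ)
    (hν : ∀ᵐ y ∂ν, 0 ≤ y) (hν0 : 0 < ν.real (Ioi 0)) (hC : 0 ≤ C)
    (hJ : J ≤ ENNReal.ofReal C • F.prod ν) (hclose : AsympEqFst J (F.prod ν))
    (hneg : TailNegligible ν (J.map fun p => p.1 * p.2)) :
    ConvEquivalent (J.map fun p => p.1 * p.2) (γ * invEndpoint ν) := by
  have hle : J.map (fun p => p.1 * p.2) ≤ ENNReal.ofReal C • (F ∗ₘ ν) := by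
    rw [Measure.mconv, ← Measure.map_smul]
    exact Measure.map_mono hJ measurable_mul
  have hneg' : TailNegligible ν (F ∗ₘ ν) := hneg.of_le_smul_right hC hle
  have := Measure.isProbabilityMeasure_map (μ := J) measurable_mul.aemeasurable
  have hprod := hF.mconv hγ hν hν0 hneg'
  exact hprod.of_le_smul hC hle one_pos
    (hclose.tendsto_mul_tail_ratio hν hC hJ hprod.tail_pos hneg')

end DependentProduct

section Density

lemma measureReal_withDensity_ofReal {α : Type*} [MeasurableSpace α] {μ : Measure α} {w : α → ℝ}
    (hw : Integrable w μ) (hw0 : ∀ a, 0 ≤ w a) {s : Set α} (hs : MeasurableSet s) :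
    (μ.withDensity fun a => ENNReal.ofReal (w a)).real s = ∫ a in s, w a ∂μ := by
  rw [measureReal_def, withDensity_apply _ hs,
    ← ofReal_integral_eq_lintegral_ofReal hw.integrableOn (ae_of_all _ hw0),
    ENNReal.toReal_ofReal (integral_nonneg hw0)]

lemma AsympEqFst.withDensity {μ : Measure (ℝ × ℝ)} {w w' : ℝ × ℝ → ℝ} (hw : Integrable w μ)
    (hw' : Integrable w' μ) (hw0 : ∀ p, 0 ≤ w p) (hw0' : ∀ p, 0 ≤ w' p)
    (h : ∀ ε > 0, ∀ᶠ u in atTop, ∀ v, |w (u, v) - w' (u, v)| ≤ ε * w' (u, v)) :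
    AsympEqFst (μ.withDensity fun p => ENNReal.ofReal (w p))
      (μ.withDensity fun p => ENNReal.ofReal (w' p)) := by
  intro ε hε
  filter_upwards [eventually_forall_ge_atTop.2 (h ε hε)] with u hu S hS hSu
  rw [measureReal_withDensity_ofReal hw hw0 hS, measureReal_withDensity_ofReal hw' hw0' hS,
    ← integral_sub hw.integrableOn hw'.integrableOn, ← integral_const_mul]
  refine abs_integral_le_integral_abs.trans (setIntegral_mono_on
    (hw.integrableOn.sub hw'.integrableOn).abs (hw'.integrableOn.const_mul ε) hS fun p hp => ?_)
  exact hu p.1 (le_of_lt (hSu hp)) p.2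

end Density

section RankScore

/-- The centred mid-rank `F(v) + F(v-) - 1` of a point `v` under the law `F`. It replaces
`2 F(v) - 1` in the density of an FGM law when the marginals may have atoms. -/
def rankScore (F : Measure ℝ) (v : ℝ) : ℝ := F.real (Iio v) - F.real (Ioi v)

variable (F : Measure ℝ) [IsProbabilityMeasure F]

lemma monotone_rankScore : Monotone (rankScore F) := fun _ _ h =>
  sub_le_sub (measureReal_mono (Iio_subset_Iio h)) (measureReal_mono (Ioi_subset_Ioi h))

lemma abs_rankScore_le_one (v : ℝ) : |rankScore F v| ≤ 1 :=
  abs_sub_le_of_nonneg_of_le measureReal_nonneg measureReal_le_one measureReal_nonneg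
    measureReal_le_one

lemma integrable_rankScore (μ : Measure ℝ) [IsFiniteMeasure μ] : Integrable (rankScore F) μ :=
  .of_bound (monotone_rankScore F).measurable.aestronglyMeasurable 1
    (ae_of_all _ (abs_rankScore_le_one F))

lemma tendsto_rankScore_atTop : Tendsto (rankScore F) atTop (nhds 1) := by
  have hlow : Tendsto (fun v => 1 - 2 * F.real (Ioi (v - 1))) atTop (nhds 1) := by
    simpa [sub_eq_add_neg] using (((tendsto_measureReal_Ioi_atTop F).comp
      (tendsto_atTop_add_const_right atTop (-1) tendsto_id)).const_mul 2).const_sub 1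
  refine tendsto_of_tendsto_of_tendsto_of_le_of_le hlow tendsto_const_nhds (fun v => ?_)
    fun v => (abs_le.1 (abs_rankScore_le_one F v)).2
  have hIci : F.real (Ici v) ≤ F.real (Ioi (v - 1)) :=
    measureReal_mono (Ici_subset_Ioi.2 (sub_one_lt v))
  have hIoi := antitone_measureReal_Ioi F (sub_one_lt v).le
  have hIio : F.real (Iio v) = 1 - F.real (Ici v) := by
    rw [← compl_Ici, probReal_compl_eq_one_sub measurableSet_Ici]
  simp only [rankScore] at *
  linarith

lemma setIntegral_rankScore {s : Set ℝ} (hs : MeasurableSet s) (hup : IsUpperSet s) :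
    ∫ v in s, rankScore F v ∂F = F.real s * F.real sᶜ := by
  set D : Set (ℝ × ℝ) := {p | p.2 < p.1}
  have hD : MeasurableSet D := measurableSet_lt measurable_snd measurable_fst
  have hbelow : ∫ v in s, F.real (Iio v) ∂F = (F.prod F).real (D ∩ s ×ˢ univ) := by
    rw [← measureReal_restrict_apply hD, ← Measure.prod_restrict, Measure.restrict_univ,
      measureReal_prod_eq_integral _ _ hD]
    rfl
  have habove : ∫ v in s, F.real (Ioi v) ∂F = (F.prod F).real (D ∩ univ ×ˢ s) := by
    rw [← measureReal_restrict_apply hD, ← Measure.prod_restrict, Measure.restrict_univ,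
      measureReal_prod_eq_integral_symm _ _ hD]
    rfl
  have hsplit : D ∩ s ×ˢ univ = D ∩ univ ×ˢ s ∪ s ×ˢ sᶜ := by
    ext ⟨a, b⟩
    constructor
    · rintro ⟨hab, ha, -⟩
      by_cases hb : b ∈ s
      exacts [.inl ⟨hab, trivial, hb⟩, .inr ⟨ha, hb⟩]
    · rintro (⟨hab, -, hb⟩ | ⟨ha, hb⟩)
      exacts [⟨hab, hup hab.le hb, trivial⟩, ⟨not_le.1 fun h => hb (hup h ha), ha, trivial⟩]
  have hdisj : Disjoint (D ∩ univ ×ˢ s) (s ×ˢ sᶜ) :=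
    disjoint_left.2 fun _ hp hp' => hp'.2 hp.2.2
  have hmono : Monotone fun v => F.real (Iio v) := fun _ _ h =>
    measureReal_mono (Iio_subset_Iio h)
  simp only [rankScore]
  rw [integral_sub (integrable_measureReal hmono.measurable)
      (integrable_measureReal (measurable_measureReal_Ioi F)), hbelow, habove, hsplit,
    measureReal_union hdisj (hs.prod hs.compl), add_sub_cancel_left, measureReal_prod_prod]

end RankScore

section FGMLaw

/-- The density of the FGM law with marginals `F` and `G` with respect to `F.prod G`. -/
def fgmDensity (F G : Measure ℝ) (θ : ℝ) (p : ℝ × ℝ) : ℝ :=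
  1 + θ * (rankScore F p.1 * rankScore G p.2)

/-- The FGM law on the plane with marginals `F` and `G` and parameter `θ`. -/
def fgmLaw (F G : Measure ℝ) (θ : ℝ) : Measure (ℝ × ℝ) :=
  (F.prod G).withDensity fun p => ENNReal.ofReal (fgmDensity F G θ p)

/-- The limit, as `u → ∞`, of the conditional law of the second coordinate under the FGM law given
that the first one is `u`. -/
def fgmLimitLaw (G : Measure ℝ) (θ : ℝ) : Measure ℝ :=
  G.withDensity fun v => ENNReal.ofReal (1 + θ * rankScore G v)

variable {F G : Measure ℝ} [IsProbabilityMeasure F] [IsProbabilityMeasure G] {θ : ℝ}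

lemma abs_mul_le_abs_of_abs_le_one {a b : ℝ} (hb : |b| ≤ 1) : |a * b| ≤ |a| :=
  (abs_mul a b).trans_le (mul_le_of_le_one_right (abs_nonneg a) hb)

lemma abs_rankScore_mul_le_one (p : ℝ × ℝ) : |rankScore F p.1 * rankScore G p.2| ≤ 1 :=
  (abs_mul_le_abs_of_abs_le_one (abs_rankScore_le_one G p.2)).trans (abs_rankScore_le_one F p.1)

lemma fgmDensity_nonneg (hθ : |θ| ≤ 1) (p : ℝ × ℝ) : 0 ≤ fgmDensity F G θ p := by
  have := neg_le_of_abs_le (abs_mul_le_abs_of_abs_le_one (a := θ)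
    (abs_rankScore_mul_le_one (F := F) (G := G) p))
  unfold fgmDensity
  linarith

lemma fgmDensity_le_two (hθ : |θ| ≤ 1) (p : ℝ × ℝ) : fgmDensity F G θ p ≤ 2 := by
  have := le_of_abs_le (abs_mul_le_abs_of_abs_le_one (a := θ)
    (abs_rankScore_mul_le_one (F := F) (G := G) p))
  unfold fgmDensity
  linarith

lemma integrable_rankScore_mul :
    Integrable (fun p : ℝ × ℝ => rankScore F p.1 * rankScore G p.2) (F.prod G) :=
  (integrable_rankScore F F).mul_prod (integrable_rankScore G G)

lemma integrable_fgmDensity (θ : ℝ) : Integrable (fgmDensity F G θ) (F.prod G) :=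
  (integrable_const 1).add (integrable_rankScore_mul.const_mul θ)

lemma measureReal_fgmLaw_prod (hθ : |θ| ≤ 1) {s t : Set ℝ} (hs : MeasurableSet s)
    (hsup : IsUpperSet s) (ht : MeasurableSet t) (htup : IsUpperSet t) :
    (fgmLaw F G θ).real (s ×ˢ t) =
      F.real s * G.real t * (1 + θ * F.real sᶜ * G.real tᶜ) := by
  rw [fgmLaw, measureReal_withDensity_ofReal (integrable_fgmDensity θ) (fgmDensity_nonneg hθ)
    (hs.prod ht)]
  unfold fgmDensity
  rw [integral_add (integrable_const _) (integrable_rankScore_mul.integrableOn.const_mul θ),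
    integral_const_mul, setIntegral_prod_mul, setIntegral_rankScore F hs hsup,
    setIntegral_rankScore G ht htup, setIntegral_const, measureReal_prod_prod, smul_eq_mul]
  ring

lemma isProbabilityMeasure_fgmLaw (hθ : |θ| ≤ 1) : IsProbabilityMeasure (fgmLaw F G θ) := by
  have h := measureReal_fgmLaw_prod (F := F) (G := G) hθ .univ isUpperSet_univ .univ
    isUpperSet_univ
  simp only [univ_prod_univ, compl_univ, measureReal_empty, mul_zero, add_zero, mul_one,
    probReal_univ] at h
  exact ⟨(ENNReal.toReal_eq_one_iff _).1 h⟩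

lemma one_sub_abs_le_one_add_mul_rankScore (v : ℝ) : 1 - |θ| ≤ 1 + θ * rankScore G v := by
  linarith [neg_le_of_abs_le (abs_mul_le_abs_of_abs_le_one (a := θ) (abs_rankScore_le_one G v))]

lemma prod_fgmLimitLaw (F G : Measure ℝ) [IsProbabilityMeasure G] (θ : ℝ) :
    F.prod (fgmLimitLaw G θ) =
      (F.prod G).withDensity fun p => ENNReal.ofReal (1 + θ * rankScore G p.2) :=
  prod_withDensity_right
    (((monotone_rankScore G).measurable.const_mul θ).const_add 1).ennreal_ofReal

lemma isProbabilityMeasure_fgmLimitLaw (hθ : |θ| ≤ 1) :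
    IsProbabilityMeasure (fgmLimitLaw G θ) := by
  have hint := (integrable_const (1 : ℝ)).add ((integrable_rankScore G G).const_mul θ)
  refine ⟨(ENNReal.toReal_eq_one_iff _).1 ?_⟩
  have h := measureReal_withDensity_ofReal hint (fun v => (sub_nonneg.2 hθ).trans
    (one_sub_abs_le_one_add_mul_rankScore v)) .univ
  refine h.trans ?_
  simp only [Pi.add_apply]
  rw [integral_add (integrable_const _) ((integrable_rankScore G _).const_mul θ),
    integral_const_mul, setIntegral_rankScore G .univ isUpperSet_univ]
  simp

lemma withDensity_ofReal_le_smul {α : Type*} [MeasurableSpace α] (μ : Measure α) {w w' : α → ℝ}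
    {C : ℝ} (hC : 0 ≤ C) (h : ∀ a, w a ≤ C * w' a) :
    μ.withDensity (fun a => ENNReal.ofReal (w a)) ≤
      ENNReal.ofReal C • μ.withDensity fun a => ENNReal.ofReal (w' a) := by
  rw [← withDensity_smul' _ _ ENNReal.ofReal_ne_top]
  refine withDensity_mono (ae_of_all _ fun a => ?_)
  rw [Pi.smul_apply, smul_eq_mul, ← ENNReal.ofReal_mul hC]
  exact ENNReal.ofReal_le_ofReal (h a)

lemma fgmLimitLaw_le_smul (hθ : |θ| ≤ 1) : fgmLimitLaw G θ ≤ ENNReal.ofReal 2 • G := by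
  have h := withDensity_ofReal_le_smul G (w := fun v => 1 + θ * rankScore G v) (w' := 1)
    zero_le_two fun v => by
      have := le_of_abs_le (abs_mul_le_abs_of_abs_le_one (a := θ) (abs_rankScore_le_one G v))
      rw [Pi.one_apply]
      linarith
  simpa [fgmLimitLaw] using h

lemma absolutelyContinuous_fgmLimitLaw (hθ : |θ| < 1) : G ≪ fgmLimitLaw G θ :=
  withDensity_absolutelyContinuous'
    (((monotone_rankScore G).measurable.const_mul θ).const_add 1).ennreal_ofReal.aemeasurable
    (ae_of_all _ fun v => (ENNReal.ofReal_pos.2 ((sub_pos.2 hθ).trans_le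
      (one_sub_abs_le_one_add_mul_rankScore v))).ne')

lemma fgmLaw_le_smul (hθ : |θ| < 1) :
    fgmLaw F G θ ≤ ENNReal.ofReal (2 / (1 - |θ|)) • F.prod (fgmLimitLaw G θ) := by
  have hθ' := sub_pos.2 hθ
  rw [prod_fgmLimitLaw]
  refine withDensity_ofReal_le_smul _ (by positivity) fun p => ?_
  calc fgmDensity F G θ p ≤ 2 := fgmDensity_le_two hθ.le p
    _ = 2 / (1 - |θ|) * (1 - |θ|) := (div_mul_cancel₀ _ hθ'.ne').symm
    _ ≤ 2 / (1 - |θ|) * (1 + θ * rankScore G p.2) := by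
        gcongr
        exact one_sub_abs_le_one_add_mul_rankScore _

lemma asympEqFst_fgmLaw (hθ : |θ| < 1) :
    AsympEqFst (fgmLaw F G θ) (F.prod (fgmLimitLaw G θ)) := by
  have hθ' := sub_pos.2 hθ
  have hlow (v : ℝ) : 1 - |θ| ≤ 1 + θ * rankScore G v := one_sub_abs_le_one_add_mul_rankScore v
  rw [prod_fgmLimitLaw]
  refine AsympEqFst.withDensity (integrable_fgmDensity θ)
    (((integrable_const 1).add ((integrable_rankScore G G).const_mul θ)).comp_snd F)
    (fgmDensity_nonneg hθ.le) (fun p => hθ'.le.trans (hlow p.2)) fun ε hε => ?_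
  have hε' : 1 - ε * (1 - |θ|) < 1 := sub_lt_self 1 (mul_pos hε hθ')
  filter_upwards [(tendsto_rankScore_atTop F).eventually_const_lt hε'] with u hu v
  have hu1 : 0 ≤ 1 - rankScore F u := sub_nonneg.2 (le_of_abs_le (abs_rankScore_le_one F u))
  calc |fgmDensity F G θ (u, v) - (1 + θ * rankScore G v)|
      = |(1 - rankScore F u) * (θ * rankScore G v)| := by
        rw [← abs_neg, fgmDensity]
        ring_nf
    _ ≤ |1 - rankScore F u| := abs_mul_le_abs_of_abs_le_one
        ((abs_mul_le_abs_of_abs_le_one (abs_rankScore_le_one G v)).trans hθ.le)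
    _ = 1 - rankScore F u := abs_of_nonneg hu1
    _ ≤ ε * (1 - |θ|) := by linarith
    _ ≤ ε * (1 + θ * rankScore G v) := by
        gcongr
        exact hlow v

theorem ConvEquivalent.map_mul_fgmLaw {γ : ℝ} (hF : ConvEquivalent F γ) (hγ : 0 ≤ γ)
    (hθ : |θ| < 1) (hG : ∀ᵐ y ∂G, 0 ≤ y) (hG0 : 0 < G.real (Ioi 0))
    (hneg : TailNegligible G ((fgmLaw F G θ).map fun p => p.1 * p.2)) :
    ConvEquivalent ((fgmLaw F G θ).map fun p => p.1 * p.2) (γ * invEndpoint G) := by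
  have hνG : fgmLimitLaw G θ ≪ G := withDensity_absolutelyContinuous _ _
  have hGν : G ≪ fgmLimitLaw G θ := absolutelyContinuous_fgmLimitLaw hθ
  have := isProbabilityMeasure_fgmLaw (F := F) (G := G) hθ.le
  have := isProbabilityMeasure_fgmLimitLaw (G := G) hθ.le
  have hν0 : 0 < (fgmLimitLaw G θ).real (Ioi 0) :=
    measureReal_nonneg.lt_of_ne' fun h => hG0.ne' <| by
      rw [measureReal_eq_zero_iff] at h ⊢
      exact hGν h
  rw [← invEndpoint_congr hνG hGν]
  exact hF.map_mul hγ (hνG.ae_le hG) hν0 (div_nonneg zero_le_two (sub_pos.2 hθ).le)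
    (fgmLaw_le_smul hθ) (asympEqFst_fgmLaw hθ)
    (hneg.of_le_smul_left zero_le_two (fgmLimitLaw_le_smul hθ.le))

end FGMLaw

section JointLaw

lemma Ioi_ae_eq_univ_or_exists_mem_support (V : Measure ℝ) (x : ℝ) :
    Ioi x =ᵐ[V] univ ∨ ∃ x' ∈ V.support, Ioi x =ᵐ[V] Ioi x' := by
  have hsupp : ∀ᵐ z ∂V, z ∈ V.support := Measure.support_mem_ae
  rcases (V.support ∩ Iic x).eq_empty_or_nonempty with hempty | hne
  · left
    filter_upwards [hsupp] with z hz
    refine propext ⟨fun _ => trivial, fun _ => not_le.1 fun hzx => ?_⟩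
    exact notMem_empty z (hempty ▸ ⟨hz, hzx⟩)
  · have hbdd : BddAbove (V.support ∩ Iic x) := bddAbove_Iic.mono inter_subset_right
    have hmem := (Measure.isClosed_support.inter isClosed_Iic).csSup_mem hne hbdd
    refine .inr ⟨_, hmem.1, ?_⟩
    filter_upwards [hsupp] with z hz
    refine propext ⟨hmem.2.trans_lt, fun hzx => not_le.1 fun hle => ?_⟩
    exact hzx.not_ge (le_csSup hbdd ⟨hz, hle⟩)

lemma prod_ae_eq_of_fst_of_snd {α β : Type*} [MeasurableSpace α] [MeasurableSpace β]
    {J : Measure (α × β)} {s s' : Set α} {t t' : Set β} (hs : s =ᵐ[J.fst] s')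
    (ht : t =ᵐ[J.snd] t') : s ×ˢ t =ᵐ[J] s' ×ˢ t' :=
  ((measurable_fst.measurePreserving J).quasiMeasurePreserving.preimage_ae_eq hs).inter
    ((measurable_snd.measurePreserving J).quasiMeasurePreserving.preimage_ae_eq ht)

lemma isCountablySpanning_range_Ioi : IsCountablySpanning (range (Ioi : ℝ → Set ℝ)) := by
  refine ⟨fun n => Ioi (-(n : ℝ)), fun n => mem_range_self _, eq_univ_of_forall fun x => ?_⟩
  obtain ⟨n, hn⟩ := exists_nat_gt (-x)
  exact mem_iUnion.2 ⟨n, neg_lt.1 hn⟩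

lemma ext_of_prod_Ioi {J J' : Measure (ℝ × ℝ)} [IsProbabilityMeasure J] [IsProbabilityMeasure J']
    (h : ∀ x y, J.real (Ioi x ×ˢ Ioi y) = J'.real (Ioi x ×ˢ Ioi y)) : J = J' := by
  have hborel : MeasurableSpace.generateFrom (range (Ioi : ℝ → Set ℝ)) = Real.measurableSpace :=
    (borel_eq_generateFrom_Ioi ℝ).symm.trans (BorelSpace.measurable_eq (α := ℝ)).symm
  refine ext_of_generate_finite _ (generateFrom_eq_prod hborel hborel isCountablySpanning_range_Ioi
    isCountablySpanning_range_Ioi).symm (isPiSystem_Ioi.prod isPiSystem_Ioi) ?_ ?_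
  · rintro _ ⟨_, ⟨x, rfl⟩, _, ⟨y, rfl⟩, rfl⟩
    exact (ENNReal.toReal_eq_toReal_iff' (measure_ne_top _ _) (measure_ne_top _ _)).1 (h x y)
  · rw [measure_univ, measure_univ]

theorem eq_fgmLaw {J : Measure (ℝ × ℝ)} [IsProbabilityMeasure J] {θ : ℝ} (hθ : |θ| ≤ 1)
    (h : ∀ x ∈ J.fst.support, ∀ y ∈ J.snd.support, J.real (Ioi x ×ˢ Ioi y) =
      J.fst.real (Ioi x) * J.snd.real (Ioi y) *
        (1 + θ * J.fst.real (Ioi x)ᶜ * J.snd.real (Ioi y)ᶜ)) :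
    J = fgmLaw J.fst J.snd θ := by
  have := isProbabilityMeasure_fgmLaw (F := J.fst) (G := J.snd) hθ
  refine ext_of_prod_Ioi fun x y => ?_
  rw [measureReal_fgmLaw_prod hθ measurableSet_Ioi (isUpperSet_Ioi x) measurableSet_Ioi
    (isUpperSet_Ioi y)]
  rcases Ioi_ae_eq_univ_or_exists_mem_support J.fst x with hx | ⟨x', hx', hx⟩
  · rw [measureReal_congr (prod_ae_eq_of_fst_of_snd hx (ae_eq_refl (Ioi y))), measureReal_congr hx,
      measureReal_congr hx.compl, Measure.snd]
    simp [map_measureReal_apply measurable_snd measurableSet_Ioi, univ_prod]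
  rcases Ioi_ae_eq_univ_or_exists_mem_support J.snd y with hy | ⟨y', hy', hy⟩
  · rw [measureReal_congr (prod_ae_eq_of_fst_of_snd (ae_eq_refl (Ioi x)) hy), measureReal_congr hy,
      measureReal_congr hy.compl, Measure.fst]
    simp [map_measureReal_apply measurable_fst measurableSet_Ioi, prod_univ]
  rw [measureReal_congr (prod_ae_eq_of_fst_of_snd hx hy), measureReal_congr hx,
    measureReal_congr hy, measureReal_congr hx.compl, measureReal_congr hy.compl]
  exact h x' hx' y' hy'

end JointLaw

section RandomVariable

variable {Ω : Type*} [MeasureSpace Ω] {X Y Z : Ω → ℝ}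

lemma rvTail_eq_measureReal (hZ : Measurable Z) (x : ℝ) :
    rvTail Z x = (Measure.map Z ℙ).real (Ioi x) :=
  (map_measureReal_apply hZ measurableSet_Ioi).symm

lemma rvCdf_eq_measureReal (hZ : Measurable Z) (x : ℝ) :
    rvCdf Z x = (Measure.map Z ℙ).real (Ioi x)ᶜ := by
  rw [compl_Ioi]
  exact (map_measureReal_apply hZ measurableSet_Iic).symm

lemma distSupport_eq_support (hZ : Measurable Z) :
    distSupport Z = (Measure.map Z ℙ).support := by
  ext y
  rw [(nhds_basis_Ioo_pos y).mem_measureSupport]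
  refine forall₂_congr fun δ _ => ?_
  rw [Measure.map_apply hZ measurableSet_Ioo]
  rfl

lemma gammaOverBeta_eq_mul_invEndpoint (hZ : Measurable Z) (γ : ℝ) :
    gammaOverBeta Z γ = γ * invEndpoint (Measure.map Z ℙ) := by
  have hset : {y | 0 < rvTail Z y} = {y | 0 < (Measure.map Z ℙ).real (Ioi y)} := by
    simp_rw [rvTail_eq_measureReal hZ]
  rw [gammaOverBeta, invEndpoint, hset, mul_ite, mul_zero, div_eq_mul_inv]

lemma assumption2_iff_tailNegligible (hX : Measurable X) (hY : Measurable Y) :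
    Assumption2 X Y ↔
      TailNegligible (Measure.map Y ℙ) (Measure.map (fun ω => X ω * Y ω) ℙ) := by
  unfold Assumption2 TailNegligible
  simp_rw [rvTail_eq_measureReal hY, rvTail_eq_measureReal (hX.fun_mul hY)]

lemma isEquivalent_const_mul_iff {α : Type*} {l : Filter α} {f g : α → ℝ} {c : ℝ} (hc : c ≠ 0)
    (hg : ∀ a, g a ≠ 0) :
    (f ~[l] fun a => c * g a) ↔ Tendsto (fun a => f a / g a) l (nhds c) := by
  rw [isEquivalent_iff_tendsto_one (Eventually.of_forall fun a => mul_ne_zero hc (hg a))]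
  have hfactor : f / (fun a => c * g a) = fun a => c⁻¹ * (f a / g a) := by
    ext a
    rw [Pi.div_apply, mul_comm c, ← div_div, div_eq_inv_mul]
  rw [hfactor, ← inv_mul_cancel₀ hc]
  exact tendsto_const_smul_iff₀ (inv_ne_zero hc)

variable [IsProbabilityMeasure (ℙ : Measure Ω)]

lemma unboundedDist_iff (hZ : Measurable Z) :
    UnboundedDist Z ↔ ∀ x, 0 < (Measure.map Z ℙ).real (Ioi x) := by
  have := Measure.isProbabilityMeasure_map (μ := (ℙ : Measure Ω)) hZ.aemeasurable
  simp_rw [UnboundedDist, rvTail_eq_measureReal hZ]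
  refine ⟨fun h x => ?_, fun h x _ => h x⟩
  exact (h (max x 1) (lt_max_of_lt_right one_pos)).trans_le
    (antitone_measureReal_Ioi _ (le_max_left x 1))

lemma memLGamma_iff_expTailed (hZ : Measurable Z) {γ : ℝ} :
    MemLGamma Z γ ↔ ExpTailed (Measure.map Z ℙ) γ := by
  simp_rw [MemLGamma, unboundedDist_iff hZ, rvTail_eq_measureReal hZ]
  have hratio (hpos : ∀ x, 0 < (Measure.map Z ℙ).real (Ioi x)) (t : ℝ) :=
    isEquivalent_const_mul_iff (l := atTop) (c := Real.exp (γ * t))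
      (f := fun x => (Measure.map Z ℙ).real (Ioi (x - t)))
      (Real.exp_pos _).ne' fun x => (hpos x).ne'
  exact ⟨fun h => .of_pos h.1 fun t ht => (hratio h.1 t).1 (h.2 t ht),
    fun h => ⟨h.tail_pos, fun t _ => (hratio h.tail_pos t).2 (h.tendsto_ratio t)⟩⟩

lemma memSGamma_iff_convEquivalent (hZ : Measurable Z) {γ : ℝ} :
    MemSGamma Z γ ↔ ConvEquivalent (Measure.map Z ℙ) γ := by
  have := Measure.isProbabilityMeasure_map (μ := (ℙ : Measure Ω)) hZ.aemeasurable
  simp_rw [MemSGamma, memLGamma_iff_expTailed hZ, rvTail_eq_measureReal hZ]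
  have hconv (hV : ExpTailed (Measure.map Z ℙ) γ)
      (hint : Integrable (fun y => Real.exp (γ * y)) (Measure.map Z ℙ)) :=
    isEquivalent_const_mul_iff (l := atTop) (f := convSqTail Z)
      (mul_pos two_pos (integral_exp_pos hint)).ne' fun x => (hV.tail_pos x).ne'
  exact ⟨fun h => ⟨h.1, h.2.1, (hconv h.1 h.2.1).1 h.2.2⟩, fun h => ⟨h.toExpTailed,
    h.integrable_exp, (hconv h.toExpTailed h.integrable_exp).2 h.tendsto_conv⟩⟩

lemma measureReal_map_Ioi_zero_pos (hY : Measurable Y) (hY0 : ∀ ω, 0 ≤ Y ω)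
    (hYnd : ℙ {ω | Y ω = 0} ≠ 1) : 0 < (Measure.map Y ℙ).real (Ioi 0) := by
  rw [map_measureReal_apply hY measurableSet_Ioi, measureReal_nonneg.lt_iff_ne',
    measureReal_ne_zero_iff]
  have hcompl : Y ⁻¹' Ioi 0 = {ω | Y ω = 0}ᶜ := by
    ext ω
    exact (hY0 ω).lt_iff_ne'
  rw [hcompl]
  exact (prob_compl_eq_zero_iff (hY (measurableSet_singleton 0))).not.2 hYnd

lemma FGM.map_prodMk_eq_fgmLaw {θ : ℝ} (h : FGM X Y θ) (hX : Measurable X) (hY : Measurable Y) :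
    Measure.map (fun ω => (X ω, Y ω)) ℙ =
      fgmLaw (Measure.map X ℙ) (Measure.map Y ℙ) θ := by
  have := Measure.isProbabilityMeasure_map (μ := (ℙ : Measure Ω)) (hX.prodMk hY).aemeasurable
  rw [← Measure.fst_map_prodMk hY (X := X), ← Measure.snd_map_prodMk hX (Y := Y)]
  refine eq_fgmLaw (abs_le.2 h.1) fun x hx y hy => ?_
  rw [Measure.fst_map_prodMk hY] at hx ⊢
  rw [Measure.snd_map_prodMk hX] at hy ⊢
  rw [← distSupport_eq_support hX] at hx
  rw [← distSupport_eq_support hY] at hy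
  rw [map_measureReal_apply (hX.prodMk hY) (measurableSet_Ioi.prod measurableSet_Ioi),
    ← rvTail_eq_measureReal hX, ← rvTail_eq_measureReal hY, ← rvCdf_eq_measureReal hX,
    ← rvCdf_eq_measureReal hY]
  exact h.2 x hx y hy

lemma FGM.map_mul_eq_fgmLaw_map {θ : ℝ} (h : FGM X Y θ) (hX : Measurable X) (hY : Measurable Y) :
    Measure.map (fun ω => X ω * Y ω) ℙ =
      (fgmLaw (Measure.map X ℙ) (Measure.map Y ℙ) θ).map fun p => p.1 * p.2 := by
  rw [← h.map_prodMk_eq_fgmLaw hX hY, Measure.map_map (by fun_prop) (hX.prodMk hY)]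
  rfl

end RandomVariable

theorem product_memS_of_fgm {Ω : Type*} [MeasureSpace Ω] [IsProbabilityMeasure (ℙ : Measure Ω)]
    (X Y : Ω → ℝ) (hXm : Measurable X) (hYm : Measurable Y)
    (hYnonneg : ∀ ω, 0 ≤ Y ω)
    (hFunb : UnboundedDist X)
    (hXnd : ℙ {ω | X ω = 0} ≠ 1) (hYnd : ℙ {ω | Y ω = 0} ≠ 1)
    (θ : ℝ) (hθ : |θ| < 1) (hFGM : FGM X Y θ) (hA2 : Assumption2 X Y)
    (γ : ℝ) (hγ : 0 ≤ γ) (hFS : MemSGamma X γ) :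
    MemSGamma (fun ω => X ω * Y ω) (gammaOverBeta Y γ) := by
  have := Measure.isProbabilityMeasure_map (μ := (ℙ : Measure Ω)) hXm.aemeasurable
  have := Measure.isProbabilityMeasure_map (μ := (ℙ : Measure Ω)) hYm.aemeasurable
  have hlaw := hFGM.map_mul_eq_fgmLaw_map hXm hYm
  have hF : ConvEquivalent (Measure.map X ℙ) γ := (memSGamma_iff_convEquivalent hXm).1 hFS
  have hG : ∀ᵐ y ∂Measure.map Y ℙ, 0 ≤ y :=
    (ae_map_iff hYm.aemeasurable measurableSet_Ici).2 (ae_of_all _ hYnonneg)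
  have hG0 := measureReal_map_Ioi_zero_pos hYm hYnonneg hYnd
  have hneg := (assumption2_iff_tailNegligible hXm hYm).1 hA2
  rw [memSGamma_iff_convEquivalent (hXm.fun_mul hYm), gammaOverBeta_eq_mul_invEndpoint hYm, hlaw]
  exact hF.map_mul_fgmLaw hγ hθ hG hG0 (hlaw ▸ hneg)
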